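/- arXiv:2202.07363 — 2 statements merged into one kernel-verified Lean document; each statement's English description precedes it below -/
import Mathlib

section
/- Let α ∈ (0,1), p > 1 real, c > 0, and let φ be an even, nontrivial steady solution with speed c (for either nonlinearity, case abs or case sgn) that is monotonically increasing on (−π, 0) and satisfies n′(φ(x)) ≤ c for every x ∈ ℝ. Then there exist δ > 0 and λ > 0 such that μ − φ(x) ≥ λ·|x|^α for every x with |x| ≤ δ, where μ = (c/p)^(1/(p−1)). -/
open Real MeasureTheory Set Filter Topology

/-- The periodic convolution kernel `K_α`: equal to the explicit integral
representation for `x ∉ 2πℤ` and to `0` on `2πℤ`. -/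
noncomputable def Kker (α x : ℝ) : ℝ :=
  letI : Decidable (∃ k : ℤ, x = 2 * π * k) := Classical.propDecidable _
  if ∃ k : ℤ, x = 2 * π * k then 0
  else (1 / (π * Real.Gamma α)) *
    ∫ t in Set.Ioi (0:ℝ),
      t ^ (α - 1) * (Real.exp t * Real.cos x - 1) /
        (1 - 2 * Real.exp t * Real.cos x + Real.exp (2 * t))

/-- A steady travelling-wave solution of speed `c` with nonlinearity `n`:
a continuous, `2π`-periodic, zero-mean function `φ` satisfying the steady
convolution equation. -/
def IsSteadySolution (α c : ℝ) (n φ : ℝ → ℝ) : Prop :=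
  Continuous φ ∧ Function.Periodic φ (2 * π) ∧
  (∫ y in (-π)..π, φ y) = 0 ∧
  ∀ x : ℝ, (∫ y in (-π)..π, Kker α (x - y) * φ y) =
    c * φ x - n (φ x) + (1 / (2 * π)) * ∫ y in (-π)..π, n (φ y)

/-- Case abs nonlinearity `n(x) = |x|^p`. -/
noncomputable def nAbs (p x : ℝ) : ℝ := |x| ^ p
/-- Case sgn nonlinearity `n(x) = x·|x|^(p-1)`. -/
noncomputable def nSgn (p x : ℝ) : ℝ := x * |x| ^ (p - 1)
/-- Derivative of the case abs nonlinearity, `n′(x) = p·x·|x|^(p-2)`. -/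
noncomputable def nAbs' (p x : ℝ) : ℝ := p * x * |x| ^ (p - 2)
/-- Derivative of the case sgn nonlinearity, `n′(x) = p·|x|^(p-1)`. -/
noncomputable def nSgn' (p x : ℝ) : ℝ := p * |x| ^ (p - 1)


namespace S13

noncomputable def Ff (s t : ℝ) : ℝ := (Real.exp t * s - 1) / (1 - 2 * Real.exp t * s + Real.exp (2 * t))

noncomputable def GG (α s : ℝ) : ℝ := (1 / (π * Real.Gamma α)) *
    ∫ t in Set.Ioi (0:ℝ), t ^ (α - 1) * Ff s t

lemma cos_eq_one_iff' (x : ℝ) : (∃ k : ℤ, x = 2 * π * k) ↔ Real.cos x = 1 := by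
  rw [Real.cos_eq_one_iff]
  constructor
  · rintro ⟨k, hk⟩; exact ⟨k, by rw [hk]; ring⟩
  · rintro ⟨k, hk⟩; exact ⟨k, by rw [← hk]; ring⟩

lemma Kker_eq (α x : ℝ) : Kker α x = if Real.cos x = 1 then 0 else GG α (Real.cos x) := by
  unfold Kker GG Ff
  by_cases h : Real.cos x = 1
  · rw [if_pos h, if_pos ((cos_eq_one_iff' x).2 h)]
  · rw [if_neg h, if_neg (fun h' => h ((cos_eq_one_iff' x).1 h'))]
    simp only [mul_div_assoc]

lemma D_eq (s t : ℝ) : 1 - 2 * Real.exp t * s + Real.exp (2 * t)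
    = (Real.exp t - 1)^2 + 2 * Real.exp t * (1 - s) := by
  have : Real.exp (2*t) = Real.exp t ^ 2 := by rw [← Real.exp_nat_mul]; norm_num
  rw [this]; ring

lemma D_pos {s t : ℝ} (hs : s < 1) : 0 < 1 - 2 * Real.exp t * s + Real.exp (2 * t) := by
  rw [D_eq]
  have := Real.exp_pos t
  have h2 : 0 < 1 - s := by linarith
  positivity

set_option maxHeartbeats 2000000 in
lemma Ff_bound {s t : ℝ} (hs : s < 1) (hs' : -1 ≤ s) (ht : 0 < t) :
    |Ff s t| ≤ 6 * Real.exp (-t/2) / √(1-s) ∧ |Ff s t| ≤ 6 * Real.exp (-t/2) / t := by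
  obtain ⟨w, hw⟩ : ∃ w, w = Real.exp (-t) := ⟨_, rfl⟩
  have hw0 : 0 < w := hw ▸ Real.exp_pos _
  have hw1 : w < 1 := by rw [hw]; rw [Real.exp_lt_one_iff]; linarith
  have he : Real.exp t = w⁻¹ := by rw [hw, ← Real.exp_neg, neg_neg]
  have he2 : Real.exp (2*t) = (w⁻¹)^2 := by rw [← he, ← Real.exp_nat_mul]; norm_num
  obtain ⟨v, hv⟩ : ∃ v, v = Real.exp (-t/2) := ⟨_, rfl⟩
  have hv0 : 0 < v := hv ▸ Real.exp_pos _
  have hwv : w = v^2 := by rw [hw, hv, ← Real.exp_nat_mul]; congr 1; push_cast; ring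
  have hv1 : v < 1 := by rw [hv]; rw [Real.exp_lt_one_iff]; linarith
  obtain ⟨r, hr⟩ : ∃ r, r = √(1-s) := ⟨_, rfl⟩
  have hr0 : 0 < r := hr ▸ Real.sqrt_pos.2 (by linarith)
  have hr2 : r^2 = 1 - s := by rw [hr]; exact Real.sq_sqrt (by linarith)
  obtain ⟨D, hD⟩ : ∃ D, D = (1-w)^2 + 2*w*(1-s) := ⟨_, rfl⟩
  have hDa : (1-w)^2 ≤ D := by rw [hD]; nlinarith
  have hDb : (1-s)/2 ≤ D := by rw [hD]; nlinarith [mul_nonneg (sq_nonneg (1-w)) (by linarith : 0 ≤ 1 + s)]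
  have hDpos : 0 < D := by linarith
  have hF : Ff s t = w * ((1-s) - (1 - w)) * (-1) / D := by
    unfold Ff
    rw [he, he2, hD]
    have h1 : (1 - 2 * w⁻¹ * s + w⁻¹^2) ≠ 0 := by
      have := D_pos (s := s) (t := t) hs
      rw [he, he2] at this; exact this.ne'
    rw [div_eq_div_iff h1 (hD ▸ hDpos.ne')]
    field_simp
    ring
  have hab : |(1-s) - (1 - w)| ≤ (1-s) + (1-w) := by
    rw [abs_le]; constructor <;> linarith
  have hFabs : |Ff s t| ≤ w * ((1-s) + (1-w)) / D := by
    rw [hF, abs_div, abs_mul, abs_mul, abs_of_pos hw0, abs_of_pos hDpos, abs_neg, abs_one, mul_one]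
    gcongr
  have hb : (1-s)/D ≤ 2 := by rw [div_le_iff₀ hDpos]; linarith
  have hr_le : r ≤ 3/2 := by nlinarith
  rw [← hv, ← hr]
  have split : w * ((1-s) + (1-w)) / D = w * ((1-s)/D + (1-w)/D) := by ring
  rw [split] at hFabs
  have hwv' : w ≤ v := by nlinarith
  constructor
  · refine hFabs.trans ?_
    rw [le_div_iff₀ hr0]
    have hA : (1-w) * r ≤ 3/2 * D := by
      have : r^2/2 ≤ D := by rw [hr2]; exact hDb
      nlinarith [sq_nonneg ((1-w) - r)]
    have hA' : (1-w)/D * r ≤ 3/2 := by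
      rw [div_mul_eq_mul_div, div_le_iff₀ hDpos]; exact hA
    have hB' : (1-s)/D * r ≤ 3 := by nlinarith
    nlinarith
  · refine hFabs.trans ?_
    rw [le_div_iff₀ ht]
    have h1 : 1 + t ≤ w⁻¹ := by rw [← he]; linarith [Real.add_one_le_exp t]
    have h1' : w * (1+t) ≤ 1 := by
      calc w * (1+t) ≤ w * w⁻¹ := by gcongr
        _ = 1 := mul_inv_cancel₀ hw0.ne'
    have hta : t ≤ (1+t)*(1-w) := by nlinarith
    have hA' : (1-w)/D * t ≤ 1 + t := by
      rw [div_mul_eq_mul_div, div_le_iff₀ hDpos]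
      nlinarith
    have hB' : (1-s)/D * t ≤ 2 * t := by gcongr
    have h2 : 1 + t/2 ≤ v⁻¹ := by
      rw [hv, ← Real.exp_neg]; have := Real.add_one_le_exp (-(-t/2)); linarith
    have h2' : v * (1+t/2) ≤ 1 := by
      calc v * (1+t/2) ≤ v * v⁻¹ := by gcongr
        _ = 1 := mul_inv_cancel₀ hv0.ne'
    have : w * ((1 - s) / D + (1 - w) / D) * t = w * ((1 - s) / D * t + (1 - w) / D * t) := by ring
    rw [this]
    have h3 : w * ((1 - s) / D * t + (1 - w) / D * t) ≤ w * (6 * (1 + t/2)) := by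
      gcongr; linarith
    refine h3.trans ?_
    rw [hwv]
    nlinarith

lemma J_bound {α s t : ℝ} (hα : α ∈ Set.Ioo (0:ℝ) 1) (hs : s < 1) (hs' : -1 ≤ s) (ht : 0 < t) :
    |t ^ (α - 1) * Ff s t| ≤ 6 * (√(1-s)) ^ (α/2 - 1) * (t ^ (α/2 - 1) * Real.exp (-t/2)) := by
  obtain ⟨h1, h2⟩ := Ff_bound hs hs' ht
  have hr0 : 0 < √(1-s) := Real.sqrt_pos.2 (by linarith)
  set r := √(1-s)
  set v := Real.exp (-t/2)
  have hv0 : 0 < v := Real.exp_pos _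
  obtain ⟨a0, a1⟩ := hα
  have h3 : |Ff s t| ≤ (6 * v / t)^(α/2) * (6 * v / r)^(1 - α/2) := by
    calc |Ff s t| = |Ff s t|^(α/2) * |Ff s t|^(1-α/2) := by
          rw [← Real.rpow_add' (abs_nonneg _) (by norm_num)]; norm_num
      _ ≤ _ := by
          apply mul_le_mul
          · exact Real.rpow_le_rpow (abs_nonneg _) h2 (by linarith)
          · exact Real.rpow_le_rpow (abs_nonneg _) h1 (by linarith)
          · positivity
          · positivity
  have h4 : (6 * v / t)^(α/2) * (6 * v / r)^(1 - α/2) = 6 * v * (t^(-(α/2)) * r ^ (α/2-1)) := by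
    rw [Real.div_rpow (by positivity) ht.le, Real.div_rpow (by positivity) hr0.le,
      Real.rpow_neg ht.le, show α/2 - 1 = -(1 - α/2) by ring, Real.rpow_neg hr0.le]
    have : (6 * v) ^ (α/2) * (6 * v) ^ (1 - α/2) = 6 * v := by
      rw [← Real.rpow_add (by positivity)]; norm_num
    rw [div_mul_div_comm, this]
    field_simp
  rw [abs_mul, abs_of_pos (Real.rpow_pos_of_pos ht _)]
  calc t ^ (α-1) * |Ff s t| ≤ t ^ (α-1) * (6 * v * (t^(-(α/2)) * r ^ (α/2-1))) := by
        rw [← h4]; gcongr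
    _ = 6 * r ^ (α/2-1) * ((t ^ (α-1) * t^(-(α/2))) * v) := by ring
    _ = _ := by rw [← Real.rpow_add ht]; rw [show α - 1 + -(α/2) = α/2 - 1 by ring]

lemma Ff_meas : Measurable (fun z : ℝ × ℝ => Ff z.1 z.2) := by
  unfold Ff; fun_prop

lemma dom_int {α : ℝ} (hα : α ∈ Set.Ioo (0:ℝ) 1) :
    IntegrableOn (fun t : ℝ => t ^ (α/2 - 1) * Real.exp (-t/2)) (Ioi 0) := by
  have := integrableOn_rpow_mul_exp_neg_mul_rpow (p := 1) (s := α/2-1) (b := 1/2)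
    (by linarith [hα.1]) one_pos (by norm_num)
  refine this.congr_fun (fun t ht => ?_) measurableSet_Ioi
  simp only [Real.rpow_one]
  congr 2; ring

lemma J_int {α s : ℝ} (hα : α ∈ Set.Ioo (0:ℝ) 1) (hs : s < 1) (hs' : -1 ≤ s) :
    IntegrableOn (fun t : ℝ => t ^ (α - 1) * Ff s t) (Ioi 0) := by
  refine Integrable.mono' ((dom_int hα).const_mul (6 * (√(1-s)) ^ (α/2 - 1))) ?_ ?_
  · apply Measurable.aestronglyMeasurable
    have : Measurable (fun t => Ff s t) := Ff_meas.comp (measurable_const.prodMk measurable_id)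
    fun_prop
  · filter_upwards [ae_restrict_mem measurableSet_Ioi] with t ht
    exact J_bound hα hs hs' ht

lemma GG_bound {α : ℝ} (hα : α ∈ Set.Ioo (0:ℝ) 1) : ∃ C, 0 ≤ C ∧ ∀ s, s < 1 → -1 ≤ s →
    |GG α s| ≤ C * (√(1-s)) ^ (α/2 - 1) := by
  have hG : 0 < Real.Gamma α := Real.Gamma_pos_of_pos hα.1
  refine ⟨(1 / (π * Real.Gamma α)) * (6 * ∫ t in Ioi (0:ℝ), (t ^ (α/2 - 1) * Real.exp (-t/2))), ?_, ?_⟩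
  · have : 0 ≤ ∫ t in Ioi (0:ℝ), (t ^ (α/2 - 1) * Real.exp (-t/2)) := by
      apply setIntegral_nonneg measurableSet_Ioi
      intro t ht
      have : (0:ℝ) < t := ht
      positivity
    have := Real.pi_pos
    positivity
  · intro s hs hs'
    unfold GG
    rw [abs_mul, abs_of_pos (by have := Real.pi_pos; positivity), mul_assoc]
    have := Real.pi_pos
    gcongr
    have := norm_integral_le_of_norm_le ((dom_int hα).const_mul (6 * (√(1-s)) ^ (α/2 - 1)))
      (f := fun t => t ^ (α - 1) * Ff s t) (by
        filter_upwards [ae_restrict_mem measurableSet_Ioi] with t ht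
        exact J_bound hα hs hs' ht)
    rw [integral_const_mul] at this
    rw [Real.norm_eq_abs] at this
    linarith

lemma GG_lower {α s₁ s₂ a : ℝ} (hα : α ∈ Set.Ioo (0:ℝ) 1) (hs : s₁ < 1) (hs' : -1 ≤ s₂)
    (h : s₂ ≤ s₁) (ha : 0 < a) :
    (1 / (π * Real.Gamma α)) * (a * ((2*a)^(α-1) * (2 * a * (s₁ - s₂) /
      ((Real.exp (2*a) - 1)^2 + 2 * Real.exp (2*a) * (1 - s₂))^2))) ≤ GG α s₁ - GG α s₂ := by
  have hG : 0 < Real.Gamma α := Real.Gamma_pos_of_pos hα.1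
  have hpi := Real.pi_pos
  unfold GG
  rw [← mul_sub, ← integral_sub (J_int hα hs (by linarith)) (J_int hα (by linarith) hs')]
  gcongr
  have hdiff : ∀ t, t ^ (α - 1) * Ff s₁ t - t ^ (α - 1) * Ff s₂ t =
      t ^ (α-1) * (Real.exp t * (Real.exp (2*t) - 1) * (s₁ - s₂) /
       ((1 - 2 * Real.exp t * s₁ + Real.exp (2 * t)) * (1 - 2 * Real.exp t * s₂ + Real.exp (2 * t)))) := by
    intro t
    rw [← mul_sub]
    congr 1
    unfold Ff
    rw [div_sub_div _ _ (D_pos hs).ne' (D_pos (by linarith)).ne']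
    congr 1
    ring
  have hnn : ∀ t ∈ Ioi (0:ℝ), 0 ≤ t ^ (α - 1) * Ff s₁ t - t ^ (α - 1) * Ff s₂ t := by
    intro t ht
    have ht : 0 < t := ht
    rw [hdiff]
    have h1 := D_pos (t := t) hs
    have h2 := D_pos (t := t) (h.trans_lt hs)
    have h3 : 0 ≤ Real.exp (2*t) - 1 := by linarith [Real.add_one_le_exp (2*t)]
    have h4 : 0 ≤ s₁ - s₂ := by linarith
    positivity
  have hint := (J_int hα hs (by linarith)).sub (J_int hα (by linarith : s₂ < 1) hs')
  calc _ = ∫ t in Icc a (2*a), ((2*a)^(α-1) * (2 * a * (s₁ - s₂) /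
      ((Real.exp (2*a) - 1)^2 + 2 * Real.exp (2*a) * (1 - s₂))^2)) := by
        rw [setIntegral_const]
        simp only [smul_eq_mul]
        rw [measureReal_def, Real.volume_Icc, ENNReal.toReal_ofReal (by linarith)]
        ring
    _ ≤ ∫ t in Icc a (2*a), (t ^ (α - 1) * Ff s₁ t - t ^ (α - 1) * Ff s₂ t) := by
        apply setIntegral_mono_on
        · exact integrableOn_const (by simp)
        · exact hint.mono_set (fun t ht => lt_of_lt_of_le ha ht.1)
        · exact measurableSet_Icc
        · intro t ⟨h1, h2⟩
          have ht : 0 < t := ha.trans_le h1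
          rw [hdiff]
          have e1 := D_pos (t := t) hs
          have e2 := D_pos (t := t) (h.trans_lt hs)
          have e3 : 2 * a ≤ Real.exp (2*t) - 1 := by linarith [Real.add_one_le_exp (2*t)]
          have e4 : 0 ≤ s₁ - s₂ := by linarith
          have e5 : 1 ≤ Real.exp t := by linarith [Real.add_one_le_exp t]
          have e6 : Real.exp t ≤ Real.exp (2*a) := Real.exp_le_exp.2 h2
          have M2 : 1 - 2 * Real.exp t * s₂ + Real.exp (2 * t) ≤
            (Real.exp (2*a) - 1)^2 + 2 * Real.exp (2*a) * (1 - s₂) := by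
            rw [D_eq]
            have : 0 ≤ 1 - s₂ := by linarith
            gcongr
          have M1 : 1 - 2 * Real.exp t * s₁ + Real.exp (2 * t) ≤
            (Real.exp (2*a) - 1)^2 + 2 * Real.exp (2*a) * (1 - s₂) := by
            refine le_trans ?_ M2
            have : 2 * Real.exp t * s₂ ≤ 2 * Real.exp t * s₁ := by gcongr
            linarith
          apply mul_le_mul
          · apply Real.rpow_le_rpow_of_nonpos ht h2; linarith [hα.2]
          · rw [sq]
            have e7 : 2 * a ≤ Real.exp t * (Real.exp (2*t) - 1) := by nlinarith
            apply div_le_div₀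
            · apply mul_nonneg _ e4
              linarith
            · gcongr
            · positivity
            · exact mul_le_mul M1 M2 e2.le (e1.le.trans M1)
          · have : 0 ≤ 1 - s₂ := by linarith
            positivity
          · positivity
    _ ≤ _ := by
        apply setIntegral_mono_set hint
        · filter_upwards [ae_restrict_mem measurableSet_Ioi] with t ht using hnn t ht
        · exact (show Icc a (2*a) ⊆ Ioi 0 from fun t ht => lt_of_lt_of_le ha ht.1).eventuallyLE

lemma GG_strict {α s₁ s₂ : ℝ} (hα : α ∈ Set.Ioo (0:ℝ) 1) (hs : s₁ < 1) (hs' : -1 ≤ s₂)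
    (h : s₂ < s₁) : GG α s₂ < GG α s₁ := by
  have := GG_lower hα hs hs' h.le one_pos
  have hG : 0 < Real.Gamma α := Real.Gamma_pos_of_pos hα.1
  have hpi := Real.pi_pos
  have h1 : 0 < s₁ - s₂ := by linarith
  have h2 : 0 < 1 - s₂ := by linarith
  have h3 : 0 < (1 / (π * Real.Gamma α)) * (1 * ((2*1)^(α-1) * (2 * 1 * (s₁ - s₂) /
      ((Real.exp (2*1) - 1)^2 + 2 * Real.exp (2*1) * (1 - s₂))^2))) := by positivity
  linarith

lemma GG_mono {α s₁ s₂ : ℝ} (hα : α ∈ Set.Ioo (0:ℝ) 1) (hs : s₁ < 1) (hs' : -1 ≤ s₂)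
    (h : s₂ ≤ s₁) : GG α s₂ ≤ GG α s₁ := by
  rcases h.eq_or_lt with h | h
  · rw [h]
  · exact (GG_strict hα hs hs' h).le

lemma GG_quant {α : ℝ} (hα : α ∈ Set.Ioo (0:ℝ) 1) : ∃ k > 0, ∀ h, 0 < h → h ≤ 1/4 →
    k * h ^ (α - 1) ≤ GG α (Real.cos (2*h)) - GG α (Real.cos (3*h)) := by
  have hG : 0 < Real.Gamma α := Real.Gamma_pos_of_pos hα.1
  have hpi := Real.pi_pos
  have hpi3 := Real.pi_gt_three
  refine ⟨(1 / (π * Real.Gamma α)) * (2 ^ (α-1) * (20 / (π^2 * 43^2))), by positivity, ?_⟩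
  intro h h0 h1
  have hc : Real.cos (2*h) - Real.cos (3*h) = 2 * Real.sin (5*h/2) * Real.sin (h/2) := by
    rw [Real.cos_sub_cos]
    rw [show (2*h-3*h)/2 = -(h/2) by ring, Real.sin_neg, show (2*h+3*h)/2 = 5*h/2 by ring]; ring
  have hs1 : 2/π * (5*h/2) ≤ Real.sin (5*h/2) := Real.mul_le_sin (by linarith) (by linarith)
  have hs2 : 2/π * (h/2) ≤ Real.sin (h/2) := Real.mul_le_sin (by linarith) (by linarith)
  have hd : 10 * h^2/π^2 ≤ Real.cos (2*h) - Real.cos (3*h) := by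
    rw [hc]
    calc 10 * h^2/π^2 = 2 * (2/π * (5*h/2)) * (2/π * (h/2)) := by field_simp; ring
      _ ≤ _ := by
        have : 0 ≤ 2/π * (5*h/2) := by positivity
        apply mul_le_mul _ hs2 (by positivity) (by linarith)
        linarith
  have hlt : Real.cos (2*h) < 1 := by
    rw [← Real.cos_zero]
    apply Real.cos_lt_cos_of_nonneg_of_le_pi <;> linarith
  have hle : Real.cos (3*h) ≤ Real.cos (2*h) := by
    have : 0 ≤ 10 * h^2/π^2 := by positivity
    linarith
  have key := GG_lower hα hlt (Real.neg_one_le_cos (3*h)) hle h0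
  refine le_trans ?_ key
  rw [mul_assoc]
  apply mul_le_mul_of_nonneg_left _ (by positivity)
  have hE : Real.exp (2*h) - 1 ≤ 4*h := by
    have := Real.abs_exp_sub_one_le (x := 2*h) (by rw [abs_of_pos] <;> linarith)
    rw [abs_of_pos (by linarith : 0 < 2*h)] at this
    linarith [le_abs_self (Real.exp (2*h) - 1)]
  have hE0 : 0 ≤ Real.exp (2*h) - 1 := by linarith [Real.add_one_le_exp (2*h)]
  have hc3 : 1 - Real.cos (3*h) ≤ (3*h)^2/2 := by linarith [Real.one_sub_sq_div_two_le_cos (x := 3*h)]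
  have hc30 : 0 ≤ 1 - Real.cos (3*h) := by linarith
  have hM : (Real.exp (2*h) - 1)^2 + 2 * Real.exp (2*h) * (1 - Real.cos (3*h)) ≤ 43 * h^2 := by
    have a1 : (Real.exp (2*h) - 1)^2 ≤ (4*h)^2 := by gcongr
    have a2 : 2 * Real.exp (2*h) * (1 - Real.cos (3*h)) ≤ 2 * 2 * ((3*h)^2/2) := by
      gcongr
      linarith
    nlinarith
  have hM0 : 0 < (Real.exp (2*h) - 1)^2 + 2 * Real.exp (2*h) * (1 - Real.cos (3*h)) := by
    have : 0 < 1 - Real.cos (3*h) := by linarith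
    positivity
  calc 2 ^ (α-1) * (20 / (π^2 * 43^2)) * h ^ (α-1)
      = h * ((2*h)^(α-1) * (2 * h * (10 * h^2/π^2) / (43 * h^2)^2)) := by
        rw [Real.mul_rpow (by norm_num) h0.le]
        field_simp
        ring
    _ ≤ _ := by
        gcongr

end S13

namespace S13

lemma K_periodic (α : ℝ) : Function.Periodic (Kker α) (2 * π) := by
  intro x; rw [Kker_eq, Kker_eq, Real.cos_add_two_pi]

lemma K_even (α x : ℝ) : Kker α (-x) = Kker α x := by
  rw [Kker_eq, Kker_eq, Real.cos_neg]

lemma K_meas (α : ℝ) : Measurable (Kker α) := by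
  have h1 : Measurable (GG α) := by
    unfold GG
    apply Measurable.const_mul
    have : StronglyMeasurable (fun z : ℝ × ℝ => z.2 ^ (α - 1) * Ff z.1 z.2) := by
      apply Measurable.stronglyMeasurable
      exact (measurable_snd.pow_const _).mul Ff_meas
    exact (this.integral_prod_right (ν := volume.restrict (Ioi 0))).measurable
  have : Kker α = fun x => if Real.cos x = 1 then 0 else GG α (Real.cos x) := by
    ext x; exact Kker_eq α x
  rw [this]
  refine Measurable.ite ?_ measurable_const (h1.comp Real.measurable_cos)
  exact Real.measurable_cos (measurableSet_singleton 1)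

lemma K_ii {α : ℝ} (hα : α ∈ Set.Ioo (0:ℝ) 1) (a b : ℝ) :
    IntervalIntegrable (Kker α) volume a b := by
  have hpi := Real.pi_pos
  obtain ⟨C, hC, hb⟩ := GG_bound hα
  have h0 : IntervalIntegrable (Kker α) volume 0 π := by
    have hr : IntervalIntegrable (fun x : ℝ => C * ((√2/π)^(α/2-1) * x ^ (α/2-1))) volume 0 π :=
      ((intervalIntegral.intervalIntegrable_rpow' (by linarith [hα.1])).const_mul _).const_mul _
    refine hr.mono_fun' (K_meas α).aestronglyMeasurable ?_
    rw [uIoc_of_le hpi.le]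
    filter_upwards [ae_restrict_mem measurableSet_Ioc] with x hx
    have hx0 : 0 < x := hx.1
    have hc := Real.cos_le_one_sub_mul_cos_sq (x := x) (by rw [abs_of_pos hx0]; exact hx.2)
    have hpos : 0 < 2 / π ^ 2 * x ^ 2 := by positivity
    have hlt : Real.cos x < 1 := by linarith
    rw [Kker_eq, if_neg hlt.ne, Real.norm_eq_abs]
    refine (hb _ hlt (Real.neg_one_le_cos x)).trans ?_
    have hs : √2/π * x ≤ √(1 - Real.cos x) := by
      apply Real.le_sqrt_of_sq_le
      rw [mul_pow, div_pow, Real.sq_sqrt (by norm_num)]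
      linarith
    rw [← Real.mul_rpow (by positivity) hx0.le]
    refine mul_le_mul_of_nonneg_left ?_ hC
    apply Real.rpow_le_rpow_of_nonpos (by positivity) hs
    linarith [hα.2]
  have h1 : IntervalIntegrable (Kker α) volume (-π) 0 := by
    have := (IntervalIntegrable.iff_comp_neg (f := Kker α) (a := 0) (b := π)).1 h0
    simp only [K_even, neg_zero] at this
    exact this.symm
  have h2 := h1.trans h0
  refine (K_periodic α).intervalIntegrable (t := -π) (by positivity) ?_ a b
  rw [show -π + 2*π = π by ring]; exact h2

lemma shift_int {f : ℝ → ℝ} (hf : Function.Periodic f (2*π)) (h : ℝ) :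
    ∫ y in (-π)..π, f (y + h) = ∫ y in (-π)..π, f y := by
  rw [intervalIntegral.integral_comp_add_right]
  have := hf.intervalIntegral_add_eq (-π + h) (-π)
  rw [show -π + h + 2*π = π + h by ring, show -π + 2*π = π by ring] at this
  exact this

lemma ii_shift {α : ℝ} (hα : α ∈ Set.Ioo (0:ℝ) 1) {φ : ℝ → ℝ} (hc : Continuous φ) (a b : ℝ) :
    IntervalIntegrable (fun y => Kker α (y + a) * φ (y + b)) volume (-π) π := by
  have h1 : IntervalIntegrable (fun y => Kker α (y + a)) volume (-π) π := by
    have := (K_ii hα (-π + a) (π + a)).comp_add_right a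
    simpa using this
  exact h1.mul_continuousOn (by fun_prop)

lemma symm_id {α : ℝ} (hα : α ∈ Set.Ioo (0:ℝ) 1) {φ : ℝ → ℝ} (hc : Continuous φ)
    (hp : Function.Periodic φ (2*π)) (he : ∀ x, φ (-x) = φ x) (h : ℝ) :
    ∫ y in (-π)..π, (Kker α (y - h) - Kker α (y + h)) * (φ (y - h) - φ (y + h)) =
    2 * ((∫ y in (-π)..π, Kker α (0 - y) * φ y) - ∫ y in (-π)..π, Kker α (2*h - y) * φ y) := by
  have A : ∀ r, ∫ y in (-π)..π, Kker α (y + r) * φ (y + r) = ∫ y in (-π)..π, Kker α (0 - y) * φ y := by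
    intro r
    have : Function.Periodic (fun y => Kker α y * φ y) (2*π) := (K_periodic α).mul hp
    rw [shift_int this r]
    simp only [zero_sub, K_even]
  have B1 : ∫ y in (-π)..π, Kker α (y + -h) * φ (y + h) = ∫ y in (-π)..π, Kker α (2*h - y) * φ y := by
    have : Function.Periodic (fun y => Kker α (2*h - y) * φ y) (2*π) := by
      refine Function.Periodic.mul (f := fun y => Kker α (2*h - y)) ?_ hp
      intro y
      simp only
      rw [← K_even, ← K_even α (2*h - y)]
      rw [show -(2*h - (y+2*π)) = -(2*h-y) + 2*π by ring]
      exact K_periodic α _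
    rw [← shift_int this h]
    congr 1; ext y
    rw [← K_even]
    congr 2; ring
  have B2 : ∫ y in (-π)..π, Kker α (y + h) * φ (y + -h) = ∫ y in (-π)..π, Kker α (2*h - y) * φ y := by
    rw [← B1]
    have := intervalIntegral.integral_comp_neg (a := -π) (b := π) (fun y => Kker α (y + -h) * φ (y + h))
    rw [neg_neg] at this
    rw [← this]
    congr 1; ext y
    rw [← K_even, ← he]
    congr 2 <;> ring
  have i1 := ii_shift hα hc (-h) (-h)
  have i2 := ii_shift hα hc h h
  have i3 := ii_shift hα hc (-h) h
  have i4 := ii_shift hα hc h (-h)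
  have e : ∀ y, (Kker α (y - h) - Kker α (y + h)) * (φ (y - h) - φ (y + h)) =
     (Kker α (y + -h) * φ (y + -h) + Kker α (y + h) * φ (y + h)) -
     (Kker α (y + -h) * φ (y + h) + Kker α (y + h) * φ (y + -h)) := by
    intro y; simp only [← sub_eq_add_neg]; ring
  simp only [e]
  rw [intervalIntegral.integral_sub (i1.add i2) (i3.add i4), intervalIntegral.integral_add i1 i2,
    intervalIntegral.integral_add i3 i4, A, A, B1, B2]
  ring

lemma int_ii {α : ℝ} (hα : α ∈ Set.Ioo (0:ℝ) 1) {φ : ℝ → ℝ} (hc : Continuous φ) (h : ℝ) :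
    IntervalIntegrable (fun y => (Kker α (y - h) - Kker α (y + h)) * (φ (y - h) - φ (y + h)))
      volume (-π) π := by
  have i1 := ii_shift hα hc (-h) (-h)
  have i2 := ii_shift hα hc h h
  have i3 := ii_shift hα hc (-h) h
  have i4 := ii_shift hα hc h (-h)
  refine ((i1.add i2).sub (i3.add i4)).congr ?_
  intro y _
  simp only [← sub_eq_add_neg]; ring

lemma phi_mono {φ : ℝ → ℝ} (hc : Continuous φ)
    (hp : Function.Periodic φ (2*π)) (he : ∀ x, φ (-x) = φ x)
    (hm : MonotoneOn φ (Ioo (-π) 0)) (x y : ℝ) (hxy : Real.cos x ≤ Real.cos y) : φ x ≤ φ y := by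
  have hcl : ∀ x y, -π ≤ x → x < y → y ≤ 0 → φ x ≤ φ y := by
    intro x y h1 h2 h3
    have t1 : Tendsto (fun e : ℝ => φ (x + e * (y - x))) (𝓝[>] 0) (𝓝 (φ x)) := by
      have : Continuous (fun e : ℝ => φ (x + e * (y - x))) := by fun_prop
      have := this.tendsto 0
      simp only [zero_mul, add_zero] at this
      exact this.mono_left nhdsWithin_le_nhds
    have t2 : Tendsto (fun e : ℝ => φ (y - e * (y - x))) (𝓝[>] 0) (𝓝 (φ y)) := by
      have : Continuous (fun e : ℝ => φ (y - e * (y - x))) := by fun_prop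
      have := this.tendsto 0
      simp only [zero_mul, sub_zero] at this
      exact this.mono_left nhdsWithin_le_nhds
    refine le_of_tendsto_of_tendsto t1 t2 ?_
    filter_upwards [Ioo_mem_nhdsGT (show (0:ℝ) < 1/2 by norm_num)] with e he
    obtain ⟨e0, e1⟩ := he
    have h4 : 0 < y - x := by linarith
    apply hm
    · constructor <;> nlinarith
    · constructor <;> nlinarith
    · nlinarith
  have hcos : ∀ x, φ x = φ (-Real.arccos (Real.cos x)) := by
    intro x
    rw [he]
    have : Real.cos (Real.arccos (Real.cos x)) = Real.cos x :=
      Real.cos_arccos (Real.neg_one_le_cos x) (Real.cos_le_one x)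
    obtain ⟨k, hk | hk⟩ := Real.cos_eq_cos_iff.1 this
    · have := hp.int_mul k (Real.arccos (Real.cos x))
      rw [← this]
      conv_lhs => rw [hk]
      congr 1; ring
    · have := hp.int_mul k (-Real.arccos (Real.cos x))
      rw [he] at this
      rw [← this]
      conv_lhs => rw [hk]
      congr 1; ring
  rw [hcos x, hcos y]
  have ha : Real.arccos (Real.cos y) ≤ Real.arccos (Real.cos x) := Real.arccos_le_arccos hxy
  rcases ha.eq_or_lt with ha | ha
  · rw [ha]
  · apply hcl
    · linarith [Real.arccos_le_pi (Real.cos x)]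
    · linarith
    · linarith [Real.arccos_nonneg (Real.cos y)]

lemma ae_ne (h : ℝ) : ∀ᵐ y : ℝ, Real.cos (y + h) ≠ 1 := by
  have : ({y : ℝ | Real.cos (y + h) = 1}).Countable := by
    refine (Set.countable_range (fun k : ℤ => 2 * π * k - h)).mono ?_
    intro y hy
    obtain ⟨k, hk⟩ := (cos_eq_one_iff' _).2 hy
    exact ⟨k, by simp only; linarith⟩
  filter_upwards [this.ae_notMem volume] with y hy using hy

lemma K_le {α : ℝ} (hα : α ∈ Set.Ioo (0:ℝ) 1) {a b : ℝ}
    (hb : Real.cos b ≠ 1) (h : Real.cos a ≤ Real.cos b) :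
    Kker α a ≤ Kker α b := by
  have hb' := lt_of_le_of_ne (Real.cos_le_one b) hb
  rw [Kker_eq, Kker_eq, if_neg hb, if_neg (h.trans_lt hb').ne]
  exact GG_mono hα hb' (Real.neg_one_le_cos a) h

lemma prod_nonneg {α : ℝ} (hα : α ∈ Set.Ioo (0:ℝ) 1) {φ : ℝ → ℝ}
    (hm : ∀ x y, Real.cos x ≤ Real.cos y → φ x ≤ φ y) (h : ℝ) :
    ∀ᵐ y : ℝ, 0 ≤ (Kker α (y - h) - Kker α (y + h)) * (φ (y - h) - φ (y + h)) := by
  filter_upwards [ae_ne h, ae_ne (-h)] with y h1 h2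
  rw [← sub_eq_add_neg] at h2
  rcases le_total (Real.cos (y-h)) (Real.cos (y+h)) with hl | hl
  · exact mul_nonneg_of_nonpos_of_nonpos (by linarith [K_le hα h1 hl]) (by linarith [hm _ _ hl])
  · exact mul_nonneg (by linarith [K_le hα h2 hl]) (by linarith [hm _ _ hl])

lemma prod_zero {α : ℝ} (hα : α ∈ Set.Ioo (0:ℝ) 1) {φ : ℝ → ℝ} (hc : Continuous φ)
    (hp : Function.Periodic φ (2*π))
    (hm : ∀ x y, Real.cos x ≤ Real.cos y → φ x ≤ φ y) (h : ℝ)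
    (h0 : ∫ y in (-π)..π, (Kker α (y - h) - Kker α (y + h)) * (φ (y - h) - φ (y + h)) ≤ 0) :
    Function.Periodic φ (2*h) := by
  have hpi := Real.pi_pos
  have hle : -π ≤ π := by linarith
  have hnn := prod_nonneg hα hm h
  have hI := (intervalIntegrable_iff_integrableOn_Icc_of_le hle).1 (int_ii hα hc h)
  rw [intervalIntegral.integral_of_le hle, ← integral_Icc_eq_integral_Ioc] at h0
  have h1 := (integral_eq_zero_iff_of_nonneg_ae (ae_restrict_of_ae hnn) hI).1
    (le_antisymm h0 (integral_nonneg_of_ae (ae_restrict_of_ae hnn)))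
  have h2 : (fun y => φ (y - h)) =ᵐ[volume.restrict (Icc (-π) π)] (fun y => φ (y + h)) := by
    filter_upwards [h1, ae_restrict_of_ae (ae_ne h), ae_restrict_of_ae (ae_ne (-h))] with y hy g1 g2
    rw [← sub_eq_add_neg] at g2
    simp only [Pi.zero_apply] at hy
    rcases mul_eq_zero.1 hy with hy | hy
    · have : Real.cos (y - h) = Real.cos (y + h) := by
        by_contra hne
        rw [Kker_eq, Kker_eq, if_neg g1, if_neg g2] at hy
        rcases lt_or_gt_of_ne hne with hl | hl
        · have := GG_strict hα (lt_of_le_of_ne (Real.cos_le_one _) g1) (Real.neg_one_le_cos _) hl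
          linarith
        · have := GG_strict hα (lt_of_le_of_ne (Real.cos_le_one _) g2) (Real.neg_one_le_cos _) hl
          linarith
      exact le_antisymm (hm _ _ this.le) (hm _ _ this.ge)
    · linarith
  have h3 := Measure.eqOn_Icc_of_ae_eq (μ := volume) (by linarith : -π ≠ π) h2 (by fun_prop) (by fun_prop)
  have hper : Function.Periodic (fun y => φ (y - h) - φ (y + h)) (2*π) := by
    intro y
    simp only
    rw [show y + 2*π - h = y - h + 2*π by ring, show y + 2*π + h = y + h + 2*π by ring, hp, hp]
  intro x
  obtain ⟨z, hz, hz'⟩ := hper.exists_mem_Ico (by positivity) (x + h) (-π)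
  have h4 := h3 (show z ∈ Icc (-π) π from ⟨hz.1, by linarith [hz.2]⟩)
  simp only at h4 hz'
  rw [h4, sub_self, show x + h - h = x by ring, show x + h + h = x + 2*h by ring] at hz'
  linarith

lemma prod_lower {α : ℝ} (hα : α ∈ Set.Ioo (0:ℝ) 1) : ∃ k > 0, ∀ {φ : ℝ → ℝ}, Continuous φ →
    (∀ x y, Real.cos x ≤ Real.cos y → φ x ≤ φ y) → ∀ h, 0 < h → h ≤ 1/4 →
    k * h ^ α * (φ (2*h) - φ (3*h)) ≤
     ∫ y in (-π)..π, (Kker α (y - h) - Kker α (y + h)) * (φ (y - h) - φ (y + h)) := by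
  obtain ⟨k, hk, hq⟩ := GG_quant hα
  refine ⟨k, hk, ?_⟩
  intro φ hc hm h h0 h1
  have hpi := Real.pi_pos
  have hpi3 := Real.pi_gt_three
  have hle : -π ≤ π := by linarith
  have hnn := prod_nonneg hα hm h
  have hI := (intervalIntegrable_iff_integrableOn_Icc_of_le hle).1 (int_ii hα hc h)
  rw [intervalIntegral.integral_of_le hle, ← integral_Icc_eq_integral_Ioc]
  have hsub : Icc (2*h) (3*h) ⊆ Icc (-π) π := Icc_subset_Icc (by linarith) (by linarith)
  have hcos : ∀ a b, 0 ≤ a → a ≤ b → b ≤ π → Real.cos b ≤ Real.cos a := fun a b ha hab hb =>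
    Real.cos_le_cos_of_nonneg_of_le_pi ha hb hab
  have hcos1 : ∀ a, 0 < a → a ≤ π → Real.cos a ≠ 1 := by
    intro a ha hb
    have := Real.cos_lt_cos_of_nonneg_of_le_pi le_rfl hb ha
    rw [Real.cos_zero] at this
    exact this.ne
  calc k * h ^ α * (φ (2*h) - φ (3*h))
      = ∫ y in Icc (2*h) (3*h), (k * h ^ (α-1)) * (φ (2*h) - φ (3*h)) := by
        rw [setIntegral_const, measureReal_def, Real.volume_Icc, ENNReal.toReal_ofReal (by linarith),
          smul_eq_mul]
        have : h ^ α = h ^ (α - 1) * h := by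
          rw [← Real.rpow_add_one h0.ne']; congr 1; ring
        rw [this]; ring
    _ ≤ ∫ y in Icc (2*h) (3*h), (Kker α (y - h) - Kker α (y + h)) * (φ (y - h) - φ (y + h)) := by
        apply setIntegral_mono_on
        · exact integrableOn_const (by simp)
        · exact hI.mono_set hsub
        · exact measurableSet_Icc
        · intro y ⟨y1, y2⟩
          have c1 : Real.cos (2*h) ≤ Real.cos (y-h) := hcos _ _ (by linarith) (by linarith) (by linarith)
          have c2 : Real.cos (y+h) ≤ Real.cos (3*h) := hcos _ _ (by linarith) (by linarith) (by linarith)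
          have c3 : Real.cos (3*h) ≤ Real.cos (2*h) := hcos _ _ (by linarith) (by linarith) (by linarith)
          have n1 := hcos1 (y-h) (by linarith) (by linarith)
          have n2 := hcos1 (2*h) (by linarith) (by linarith)
          have n3 := hcos1 (3*h) (by linarith) (by linarith)
          have k1 := K_le hα n1 c1
          have k2 := K_le hα n3 c2
          have k3 := hq h h0 h1
          have k4 : Kker α (2*h) = GG α (Real.cos (2*h)) := by rw [Kker_eq, if_neg n2]
          have k5 : Kker α (3*h) = GG α (Real.cos (3*h)) := by rw [Kker_eq, if_neg n3]
          have f1 := hm _ _ c1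
          have f2 := hm _ _ c2
          have f3 := hm _ _ c3
          have k0 : 0 < k * h ^ (α-1) := by positivity
          apply mul_le_mul <;> linarith
    _ ≤ _ := by
        apply setIntegral_mono_set hI
        · exact ae_restrict_of_ae hnn
        · exact hsub.eventuallyLE

lemma taylor {p μ : ℝ} (hp : 1 < p) (hμ : 0 < μ) : ∃ C > 0, ∀ v, 0 < v → v ≤ μ →
    p * μ^(p-1) * (μ - v) - (μ ^ p - v ^ p) ≤ C * (μ - v)^2 := by
  refine ⟨p * (μ^(p-1) * (max (p-1) 1 / μ)), by positivity, ?_⟩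
  intro v hv hvμ
  have h1 : v ^ p + p * v^(p-1) * (μ - v) ≤ μ ^ p := by
    have := one_add_mul_self_le_rpow_one_add (s := μ/v - 1) (p := p)
      (by have : 0 < μ/v := by positivity
          linarith) hp.le
    rw [show 1 + (μ/v - 1) = μ/v by ring, Real.div_rpow hμ.le hv.le, le_div_iff₀ (by positivity)] at this
    refine le_trans (le_of_eq ?_) this
    have : v ^ p = v ^ (p-1) * v := by
      rw [← Real.rpow_add_one hv.ne']; congr 1; ring
    rw [this]
    field_simp
  have h2 : μ^(p-1) - v^(p-1) ≤ μ^(p-1) * (max (p-1) 1 / μ) * (μ - v) := by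
    have hx0 : 0 < v/μ := by positivity
    have hx1 : v/μ ≤ 1 := by rw [div_le_one hμ]; exact hvμ
    have h3 : 1 - (v/μ)^(p-1) ≤ max (p-1) 1 * (1 - v/μ) := by
      rcases le_total 1 (p-1) with hq | hq
      · rw [max_eq_left hq]
        have := one_add_mul_self_le_rpow_one_add (s := v/μ - 1) (p := p-1) (by linarith) hq
        rw [show 1 + (v/μ - 1) = v/μ by ring] at this
        linarith
      · rw [max_eq_right hq]
        have := Real.rpow_le_rpow_of_exponent_ge hx0 hx1 hq
        rw [Real.rpow_one] at this
        linarith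
    rw [Real.div_rpow hv.le hμ.le] at h3
    have h4 := mul_le_mul_of_nonneg_left h3 (by positivity : 0 ≤ μ^(p-1))
    calc μ^(p-1) - v^(p-1) = μ^(p-1) * (1 - v^(p-1)/μ^(p-1)) := by
          have : μ^(p-1) ≠ 0 := by positivity
          field_simp
      _ ≤ _ := h4
      _ = _ := by field_simp
  have h5 := mul_le_mul_of_nonneg_left h2 (by nlinarith : 0 ≤ p * (μ - v))
  nlinarith

lemma iterate {u : ℝ → ℝ} {α κ δ : ℝ} (hα : 0 < α) (hκ : 0 < κ) (hδ : 0 < δ)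
    (hpos : ∀ x, 0 < x → x ≤ δ → 0 < u x)
    (hmono : ∀ x y, 0 < x → x ≤ y → y ≤ δ → u x ≤ u y)
    (hineq : ∀ x, 0 < x → x ≤ δ → κ * x ^ α * (u (3*x/2) - u x) ≤ u x ^ 2) :
    ∃ lam > 0, ∀ x, 0 < x → x ≤ δ → lam * x ^ α ≤ u x := by
  have hA : 1 < (3/2:ℝ)^α := Real.one_lt_rpow (by norm_num) hα
  have hu := hpos (2*δ/3) (by linarith) (by linarith)
  obtain ⟨lam, hl⟩ : ∃ lam, lam = min (u (2*δ/3) / δ^α) (κ * ((3/2:ℝ)^α - 1)) := ⟨_, rfl⟩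
  have hl0 : 0 < lam := by
    rw [hl]; apply lt_min
    · positivity
    · apply mul_pos hκ; linarith
  have hl1 : lam * δ ^ α ≤ u (2*δ/3) := by
    rw [← le_div_iff₀ (by positivity), hl]; exact min_le_left _ _
  have hl2 : lam ≤ κ * ((3/2:ℝ)^α - 1) := by rw [hl]; exact min_le_right _ _
  refine ⟨lam, hl0, ?_⟩
  have base : ∀ x, 2*δ/3 ≤ x → x ≤ δ → lam * x ^ α ≤ u x := by
    intro x h1 h2
    calc lam * x ^ α ≤ lam * δ ^ α := by
          gcongr
          linarith
      _ ≤ _ := hl1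
      _ ≤ _ := hmono _ _ (by linarith) h1 h2
  have main : ∀ m : ℕ, ∀ x, (2/3:ℝ)^m * δ ≤ x → x ≤ δ → lam * x ^ α ≤ u x := by
    intro m
    induction m with
    | zero => intro x h1 h2; exact base x (by simp at h1; linarith) h2
    | succ m ih =>
      intro x h1 h2
      by_cases hx : 2*δ/3 ≤ x
      · exact base x hx h2
      · push Not at hx
        have hx0 : 0 < x := lt_of_lt_of_le (by positivity) h1
        have := ih (3*x/2) (by rw [pow_succ] at h1; linarith) (by linarith)
        rw [show 3*x/2 = (3/2)*x by ring, Real.mul_rpow (by norm_num) hx0.le] at this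
        have h3 := hineq x hx0 h2
        rw [show 3*x/2 = (3/2)*x by ring] at h3
        by_contra hlt
        push Not at hlt
        have hX : 0 < x ^ α := by positivity
        have hux := hpos x hx0 h2
        set X := x ^ α
        set A := (3/2:ℝ)^α
        have h4 : lam * X * (A - 1) < u (3/2*x) - u x := by linarith
        have h5 : κ * X * (lam * X * (A - 1)) < u x ^ 2 := lt_of_lt_of_le (by gcongr) h3
        have h6 : u x ^ 2 < (lam * X)^2 := by gcongr
        have h7 : lam * (lam * X^2) ≤ κ * (A-1) * (lam * X^2) := by gcongr
        nlinarith
  intro x h1 h2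
  obtain ⟨m, hm⟩ := exists_pow_lt_of_lt_one (show 0 < x/δ by positivity) (show (2/3:ℝ) < 1 by norm_num)
  refine main m x ?_ h2
  rw [lt_div_iff₀ hδ] at hm
  exact hm.le

end S13

/-- One-sided `α`-Hölder lower bound at the crest: for an even,
nontrivial steady solution increasing on `(−π,0)` with `n′(φ) ≤ c` everywhere,
one has `μ − φ(x) ≥ λ·|x|^α` near `0`, where `μ = (c/p)^{1/(p−1)}`. -/
theorem statement13 (α p c : ℝ) (hα : α ∈ Set.Ioo (0:ℝ) 1) (hp : 1 < p) (hc : 0 < c)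
    (n n' : ℝ → ℝ)
    (hn : (n = nAbs p ∧ n' = nAbs' p) ∨ (n = nSgn p ∧ n' = nSgn' p))
    (φ : ℝ → ℝ) (hφ : IsSteadySolution α c n φ)
    (hnt : ∃ x, φ x ≠ 0) (heven : ∀ x, φ (-x) = φ x)
    (hmono : MonotoneOn φ (Set.Ioo (-π) 0))
    (hle : ∀ x : ℝ, n' (φ x) ≤ c) :
    ∃ δ > 0, ∃ lam > 0, ∀ x : ℝ, |x| ≤ δ →
      lam * |x| ^ α ≤ (c / p) ^ (1 / (p - 1)) - φ x := by
  have hpi := Real.pi_pos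
  obtain ⟨hcont, hper, hmean, heq⟩ := hφ
  have hm := S13.phi_mono hcont hper heven hmono
  have hp1 : 0 < p - 1 := by linarith
  obtain ⟨μ, hμ⟩ : ∃ μ, μ = (c / p) ^ (1 / (p - 1)) := ⟨_, rfl⟩
  rw [← hμ]
  have hμ0 : 0 < μ := by rw [hμ]; positivity
  have hμp : μ ^ (p - 1) = c / p := by
    rw [hμ, ← Real.rpow_mul (by positivity), one_div, inv_mul_cancel₀ hp1.ne', Real.rpow_one]
  have hcμ : c = p * μ ^ (p - 1) := by rw [hμp]; field_simp
  have hroot : ∀ v, 0 ≤ v → p * v ^ (p - 1) ≤ c → v ≤ μ := by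
    intro v hv h
    by_contra hlt
    push Not at hlt
    have : μ ^ (p-1) < v ^ (p-1) := Real.rpow_lt_rpow hμ0.le hlt hp1
    rw [hcμ] at h
    nlinarith
  have hφμ : ∀ x, φ x ≤ μ := by
    intro x
    rcases le_or_gt (φ x) 0 with h | h
    · linarith
    · apply hroot _ h.le
      have h1 := hle x
      rcases hn with ⟨_, h2⟩ | ⟨_, h2⟩
      · rw [h2, nAbs', abs_of_pos h] at h1
        refine le_trans (le_of_eq ?_) h1
        rw [show p - 1 = (p - 2) + 1 by ring, Real.rpow_add_one h.ne']; ring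
      · rw [h2, nSgn', abs_of_pos h] at h1
        exact h1
  have hnv : ∀ v, 0 < v → n v = v ^ p := by
    intro v hv
    rcases hn with ⟨h2, _⟩ | ⟨h2, _⟩
    · rw [h2, nAbs, abs_of_pos hv]
    · rw [h2, nSgn, abs_of_pos hv]
      conv_rhs => rw [show p = (p - 1) + 1 by ring, Real.rpow_add_one hv.ne']
      ring
  have hφ0 : ∀ x, φ x ≤ φ 0 := fun x => hm _ _ (by rw [Real.cos_zero]; exact Real.cos_le_one x)
  rcases (hφμ 0).lt_or_eq with h0 | h0
  · refine ⟨1, one_pos, μ - φ 0, by linarith, ?_⟩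
    intro x hx
    have h1 : |x| ^ α ≤ 1 := Real.rpow_le_one (abs_nonneg x) hx hα.1.le
    have h2 := hφ0 x
    nlinarith
  · obtain ⟨C, hC, hT⟩ := S13.taylor hp hμ0
    obtain ⟨k, hk, hlow⟩ := S13.prod_lower hα
    obtain ⟨δ₁, hδ₁, hball⟩ : ∃ δ₁ > 0, ∀ x, |x| < δ₁ → 0 < φ x := by
      have : ∀ᶠ x in 𝓝 (0:ℝ), 0 < φ x :=
        hcont.continuousAt.eventually (lt_mem_nhds (by rw [h0]; exact hμ0))
      obtain ⟨d, hd, hd'⟩ := Metric.eventually_nhds_iff.1 this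
      exact ⟨d, hd, fun x hx => hd' (by rwa [Real.dist_eq, sub_zero])⟩
    have hkey : ∀ h, 0 < φ (2*h) →
        ∫ y in (-π)..π, (Kker α (y - h) - Kker α (y + h)) * (φ (y - h) - φ (y + h))
          ≤ 2 * C * (μ - φ (2*h))^2 := by
      intro h hh
      rw [S13.symm_id hα hcont hper heven h, heq 0, heq (2*h), h0, hnv _ hμ0, hnv _ hh]
      have := hT _ hh (hφμ (2*h))
      rw [← hcμ] at this
      linarith
    obtain ⟨δ, hδ⟩ : ∃ δ, δ = min (δ₁/2) (1/2) := ⟨_, rfl⟩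
    have hδ0 : 0 < δ := by rw [hδ]; apply lt_min <;> linarith
    have hδa : δ ≤ δ₁/2 := by rw [hδ]; exact min_le_left _ _
    have hδb : δ ≤ 1/2 := by rw [hδ]; exact min_le_right _ _
    have hpi3 := Real.pi_gt_three
    have hanti : ∀ x y, 0 ≤ x → x ≤ y → y ≤ π → φ y ≤ φ x := fun x y a b d =>
      hm _ _ (Real.cos_le_cos_of_nonneg_of_le_pi a d b)
    have hφpos : ∀ x, 0 < x → x ≤ δ → 0 < φ x := fun x a b =>
      hball x (by rw [abs_of_pos a]; linarith)
    have hIt := S13.iterate (u := fun x => μ - φ x) (α := α)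
      (κ := k / 2 ^ α / (2 * C)) (δ := δ) hα.1 (by positivity) hδ0 ?_ ?_ ?_
    · obtain ⟨lam, hl, hmain⟩ := hIt
      refine ⟨δ, hδ0, lam, hl, ?_⟩
      intro x hx
      have habs : φ |x| = φ x := by
        rcases abs_choice x with h | h <;> rw [h]
        exact heven x
      rcases (abs_nonneg x).eq_or_lt with hx0 | hx0
      · rw [← hx0, Real.zero_rpow hα.1.ne', mul_zero]
        linarith [hφμ x]
      · rw [← habs]
        exact hmain _ hx0 hx
    · intro x hx hxδ
      by_contra hcon
      have hxμ : φ x = μ := le_antisymm (hφμ x) (by linarith)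
      have hI := hkey (x/2) (by rw [show 2 * (x/2) = x by ring]; exact hφpos x hx hxδ)
      rw [show 2 * (x/2) = x by ring, hxμ, sub_self] at hI
      have hP := S13.prod_zero hα hcont hper hm (x/2) (by linarith)
      rw [show 2 * (x/2) = x by ring] at hP
      have hconst : ∀ y, φ y = μ := by
        intro y
        obtain ⟨z, hz, hz'⟩ := hP.exists_mem_Ico₀ hx y
        rw [hz']
        apply le_antisymm (hφμ z)
        rw [← hxμ]
        exact hanti _ _ hz.1 hz.2.le (by linarith)
      simp only [hconst, intervalIntegral.integral_const, smul_eq_mul] at hmean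
      have : 0 < (π - -π) * μ := by apply mul_pos _ hμ0; linarith
      linarith
    · intro x y a b d
      have := hanti x y a.le b (by linarith)
      linarith
    · intro x hx hxδ
      have h1 := hlow hcont hm (x/2) (by linarith) (by linarith)
      have h2 := hkey (x/2) (by rw [show 2 * (x/2) = x by ring]; exact hφpos x hx hxδ)
      have h3 := h1.trans h2
      rw [show 2 * (x/2) = x by ring, show 3 * (x/2) = 3*x/2 by ring,
        Real.div_rpow hx.le (by norm_num)] at h3
      have h4 : k / 2 ^ α / (2 * C) * x ^ α * (μ - φ (3 * x / 2) - (μ - φ x)) =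
          (k * (x ^ α / 2 ^ α) * (φ x - φ (3 * x / 2))) / (2 * C) := by
        field_simp
        ring
      rw [h4, div_le_iff₀ (by positivity)]
      linarith
end

section
/- Let α ∈ (0,1) and p > 1 real. There exists δ > 0, depending only on α and p, with the following property: for every c > 0 and every even, nontrivial steady solution φ with speed c (for either nonlinearity) that is monotonically increasing on (−π, 0) and satisfies n′(φ(x)) ≤ c for every x ∈ ℝ — where in case sgn one additionally assumes φ(−π/2) = 0 — one has c ≥ δ. Moreover, in case abs one has the stronger uniform bound c − n′(φ(−π)) ≥ δ, so in particular φ is infinitely differentiable on a neighbourhood of −π. -/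
open Real MeasureTheory Set Filter Topology

/-- A cutoff weight: `1` up to `2` and `1/t` beyond. -/
noncomputable def qwt (t : ℝ) : ℝ := if t ≤ 2 then 1 else t⁻¹

lemma qwt_nonneg {t : ℝ} (ht : 0 < t) : 0 ≤ qwt t := by
  unfold qwt; split_ifs <;> positivity

lemma integrableOn_qwt {α : ℝ} (h0 : 0 < α) (h1 : α < 1) :
    IntegrableOn (fun t : ℝ => t ^ (α - 1) * qwt t) (Ioi 0) := by
  have e : Ioi (0:ℝ) = Ioc 0 2 ∪ Ioi 2 := (Ioc_union_Ioi_eq_Ioi (by norm_num)).symm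
  rw [e, integrableOn_union]
  constructor
  · have : IntegrableOn (fun t : ℝ => t ^ (α - 1)) (Ioc 0 2) := by
      rw [← intervalIntegrable_iff_integrableOn_Ioc_of_le (by norm_num)]
      exact intervalIntegral.intervalIntegrable_rpow' (by linarith)
    refine this.congr_fun ?_ measurableSet_Ioc
    intro t ht
    simp [qwt, ht.2]
  · have : IntegrableOn (fun t : ℝ => t ^ (α - 2)) (Ioi 2) :=
      integrableOn_Ioi_rpow_of_lt (by linarith) (by norm_num)
    refine this.congr_fun ?_ measurableSet_Ioi
    intro t ht
    have ht' : (2:ℝ) < t := ht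
    have hp : 0 < t := by linarith
    simp only [qwt, not_le.mpr ht', if_false]
    rw [← Real.rpow_neg_one t, ← Real.rpow_add hp]
    congr 1; ring

lemma integrableOn_of_qwt_bound {E : Type*} [NormedAddCommGroup E] [NormedSpace ℝ E]
    {α C : ℝ} (h0 : 0 < α) (h1 : α < 1) {f : ℝ → E}
    (hm : AEStronglyMeasurable f (volume.restrict (Ioi 0)))
    (hb : ∀ t > 0, ‖f t‖ ≤ C * qwt t) :
    IntegrableOn (fun t : ℝ => (t ^ (α - 1)) • f t) (Ioi 0) := by
  refine Integrable.mono' ((integrableOn_qwt h0 h1).const_mul C) ?_ ?_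
  · refine AEStronglyMeasurable.smul ?_ hm
    exact (measurable_id.pow_const _).aestronglyMeasurable
  · refine (ae_restrict_iff' measurableSet_Ioi).mpr (ae_of_all _ fun t ht => ?_)
    have ht' : (0:ℝ) < t := ht
    rw [norm_smul, Real.norm_of_nonneg (by positivity)]
    calc t ^ (α - 1) * ‖f t‖ ≤ t ^ (α - 1) * (C * qwt t) := by
          gcongr; exact hb t ht'
      _ = C * (t ^ (α - 1) * qwt t) := by ring

/-- `(e^z-1)/z`, extended to `0`. -/
noncomputable def Efun : ℂ → ℂ := dslope Complex.exp 0
/-- `1/(e^z-1) - 1/z`, extended to `0`. -/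
noncomputable def gfun : ℂ → ℂ := dslope (fun z => (Efun z)⁻¹) 0

/-- The strip of half-width `2π`. -/
def strip : Set ℂ := {z | |z.im| < 2 * π}

lemma isOpen_strip : IsOpen strip :=
  isOpen_lt (continuous_abs.comp Complex.continuous_im) continuous_const

lemma exp_ne_one_strip {z : ℂ} (hz : z ∈ strip) (h0 : z ≠ 0) : Complex.exp z - 1 ≠ 0 := by
  intro h
  have h1 : Complex.exp z = 1 := by linear_combination h
  obtain ⟨n, hn⟩ := Complex.exp_eq_one_iff.mp h1
  have him : z.im = n * (2 * π) := by rw [hn]; simp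
  have hz' : |z.im| < 2 * π := hz
  rw [him, abs_mul, abs_of_pos (by positivity : (0:ℝ) < 2 * π)] at hz'
  have h3 : |(n:ℝ)| < 1 := by
    by_contra h4
    push Not at h4
    nlinarith [Real.pi_pos]
  have : n = 0 := by
    have : |n| < 1 := by exact_mod_cast h3
    exact Int.abs_lt_one_iff.mp this
  apply h0; rw [hn, this]; simp

lemma Efun_of_ne {z : ℂ} (h0 : z ≠ 0) : Efun z = (Complex.exp z - 1) / z := by
  simp [Efun, dslope_of_ne _ h0, slope_def_field]

lemma Efun_zero : Efun 0 = 1 := by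
  simp [Efun, dslope_same]

lemma Efun_ne {z : ℂ} (hz : z ∈ strip) : Efun z ≠ 0 := by
  by_cases h0 : z = 0
  · rw [h0, Efun_zero]; exact one_ne_zero
  · rw [Efun_of_ne h0]; exact div_ne_zero (exp_ne_one_strip hz h0) h0

lemma gfun_of_ne {z : ℂ} (hz : z ∈ strip) (h0 : z ≠ 0) :
    gfun z = (Complex.exp z - 1)⁻¹ - z⁻¹ := by
  have h1 := exp_ne_one_strip hz h0
  simp only [gfun, dslope_of_ne _ h0, slope_def_field, Efun_zero, Efun_of_ne h0]
  field_simp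
  ring

lemma differentiableOn_gfun : DifferentiableOn ℂ gfun strip := by
  have h0 : strip ∈ 𝓝 (0:ℂ) := isOpen_strip.mem_nhds (by simp [strip, Real.pi_pos])
  refine (Complex.differentiableOn_dslope h0).mpr ?_
  refine DifferentiableOn.inv ?_ fun z hz => Efun_ne hz
  exact (Complex.differentiableOn_dslope h0).mpr Complex.differentiable_exp.differentiableOn

lemma norm_inv_exp_sub_one_le {z : ℂ} (h : 0 < z.re) : ‖(Complex.exp z - 1)⁻¹‖ ≤ (z.re)⁻¹ := by
  rw [norm_inv]
  apply inv_anti₀ h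
  have : ‖Complex.exp z‖ - ‖(1:ℂ)‖ ≤ ‖Complex.exp z - 1‖ := norm_sub_norm_le _ _
  rw [Complex.norm_exp, norm_one] at this
  linarith [Real.add_one_le_exp z.re]

lemma gfun_bound : ∃ C : ℝ, 0 ≤ C ∧ ∀ t : ℝ, 0 < t → ∀ z : ℂ, |z.re - t| ≤ 1 → |z.im| ≤ 6.1 →
    ‖gfun z‖ ≤ C * qwt t := by
  have hpi : (6.1:ℝ) < 2 * π := by linarith [Real.pi_gt_d2]
  have hc : IsCompact (Set.Icc (-1:ℝ) 3 ×ℂ Set.Icc (-6.1:ℝ) 6.1) :=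
    isCompact_Icc.reProdIm isCompact_Icc
  have hsub : (Set.Icc (-1:ℝ) 3 ×ℂ Set.Icc (-6.1:ℝ) 6.1) ⊆ strip := by
    intro z hz
    rw [Complex.mem_reProdIm] at hz
    exact lt_of_le_of_lt (abs_le.mpr hz.2) hpi
  obtain ⟨C, hC⟩ := hc.exists_bound_of_continuousOn (differentiableOn_gfun.continuousOn.mono hsub)
  refine ⟨max C 4, by positivity, fun t ht z hz1 hz2 => ?_⟩
  rw [abs_le] at hz1
  unfold qwt
  split_ifs with h2
  · rw [mul_one]
    refine (hC z ?_).trans (le_max_left _ _)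
    rw [Complex.mem_reProdIm]
    exact ⟨⟨by linarith, by linarith⟩, abs_le.mp hz2⟩
  · push Not at h2
    have hre : t / 2 ≤ z.re := by linarith
    have hre0 : 0 < z.re := by linarith
    have hz0 : z ≠ 0 := by rintro rfl; simp at hre0
    rw [gfun_of_ne (lt_of_le_of_lt hz2 hpi) hz0]
    have h3 : ‖z⁻¹‖ ≤ (z.re)⁻¹ := by
      rw [norm_inv]
      exact inv_anti₀ hre0 ((le_abs_self _).trans (Complex.abs_re_le_norm z))
    have h4 : (z.re)⁻¹ ≤ 2 * t⁻¹ := by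
      have := inv_anti₀ (by positivity) hre
      rwa [inv_div, div_eq_mul_inv] at this
    calc _ ≤ ‖(Complex.exp z - 1)⁻¹‖ + ‖z⁻¹‖ := norm_sub_le _ _
      _ ≤ 4 * t⁻¹ := by linarith [norm_inv_exp_sub_one_le hre0]
      _ ≤ _ := by gcongr; exact le_max_right _ _

/-- The regular part of the kernel, as a holomorphic function. -/
noncomputable def Gint (α : ℝ) (ζ : ℂ) : ℂ :=
  ∫ t in Ioi (0:ℝ), (t ^ (α - 1)) • gfun (t - Complex.I * ζ)

/-- Domain of holomorphy used for the regular part. -/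
def Udom : Set ℂ := {ζ | |ζ.re| < 6 ∧ |ζ.im| < 0.9}

lemma isOpen_Udom : IsOpen Udom :=
  (isOpen_lt (continuous_abs.comp Complex.continuous_re) continuous_const).inter
    (isOpen_lt (continuous_abs.comp Complex.continuous_im) continuous_const)

lemma Udom_strip {ζ : ℂ} (h : ζ ∈ Udom) (t : ℝ) : (t - Complex.I * ζ) ∈ strip := by
  have : |(t - Complex.I * ζ).im| < 6 := by simpa using h.1
  exact lt_trans this (by linarith [Real.pi_gt_d2])

lemma gfun_line_meas {ζ : ℂ} (h : ζ ∈ Udom) :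
    Continuous (fun t : ℝ => gfun (t - Complex.I * ζ)) := by
  rw [← continuousOn_univ]
  exact differentiableOn_gfun.continuousOn.comp (by fun_prop) fun t _ => Udom_strip h t

lemma integrableOn_gfun {α : ℝ} (h0 : 0 < α) (h1 : α < 1) {ζ : ℂ} (h : ζ ∈ Udom) :
    IntegrableOn (fun t : ℝ => (t ^ (α - 1)) • gfun (t - Complex.I * ζ)) (Ioi 0) := by
  obtain ⟨C, hC0, hC⟩ := gfun_bound
  refine integrableOn_of_qwt_bound (C := C) h0 h1 (gfun_line_meas h).aestronglyMeasurable
    fun t ht => hC t ht _ ?_ ?_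
  · simp; linarith [h.2]
  · simp; linarith [h.1]

lemma differentiableOn_Gint {α : ℝ} (h0 : 0 < α) (h1 : α < 1) :
    DifferentiableOn ℂ (Gint α) Udom := by
  intro ζ hζ
  apply DifferentiableAt.differentiableWithinAt
  obtain ⟨C, hC0, hC⟩ := gfun_bound
  have key := hasDerivAt_integral_of_dominated_loc_of_deriv_le
    (μ := volume.restrict (Ioi (0:ℝ))) (x₀ := ζ) (s := Udom)
    (F := fun ζ t => (t ^ (α - 1)) • gfun (t - Complex.I * ζ))
    (F' := fun ζ t => (t ^ (α - 1)) • (deriv gfun (t - Complex.I * ζ) * (-Complex.I)))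
    (bound := fun t => C * 10 * (t ^ (α - 1) * qwt t))
    (isOpen_Udom.mem_nhds hζ) ?_ (integrableOn_gfun h0 h1 hζ) ?_ ?_ ?_ ?_
  · exact key.2.differentiableAt
  · filter_upwards [isOpen_Udom.mem_nhds hζ] with ζ' h'
    exact (integrableOn_gfun h0 h1 h').aestronglyMeasurable
  · apply Measurable.aestronglyMeasurable
    refine Measurable.smul (measurable_id.pow_const _) ?_
    exact ((measurable_deriv gfun).comp (by fun_prop)).mul_const _
  · refine (ae_restrict_iff' measurableSet_Ioi).mpr (ae_of_all _ fun t ht ζ' h' => ?_)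
    have ht' : (0:ℝ) < t := ht
    have hd : ‖deriv gfun (t - Complex.I * ζ')‖ ≤ C * qwt t / 0.1 := by
      refine Complex.norm_deriv_le_of_forall_mem_sphere_norm_le (by norm_num) ?_ ?_
      · refine DifferentiableOn.diffContOnCl ?_
        refine differentiableOn_gfun.mono ?_
        intro z hz
        have hz := Metric.closure_ball_subset_closedBall hz
        rw [Metric.mem_closedBall, Complex.dist_eq] at hz
        have := (Complex.abs_im_le_norm _).trans hz
        simp at this
        have h6 := h'.1
        rw [abs_le] at this; rw [abs_lt] at h6
        have := Real.pi_gt_d2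
        change |z.im| < _
        rw [abs_lt]; constructor <;> linarith
      · intro z hz
        rw [Metric.mem_sphere, Complex.dist_eq] at hz
        have hi := (Complex.abs_im_le_norm _).trans hz.le
        have hr := (Complex.abs_re_le_norm _).trans hz.le
        simp at hi hr
        have h6 := h'.1
        have h9 := h'.2
        rw [abs_le] at hi hr; rw [abs_lt] at h6 h9
        apply hC t ht' <;> rw [abs_le] <;> constructor <;> linarith
    rw [norm_smul, norm_mul, Real.norm_of_nonneg (by positivity)]
    simp only [norm_neg, Complex.norm_I, mul_one]
    calc _ ≤ t ^ (α - 1) * (C * qwt t / 0.1) := by gcongr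
      _ = _ := by norm_num; ring
  · exact (integrableOn_qwt h0 h1).const_mul _
  · refine (ae_restrict_iff' measurableSet_Ioi).mpr (ae_of_all _ fun t ht ζ' h' => ?_)
    have h2 : HasDerivAt gfun (deriv gfun (t - Complex.I * ζ')) (t - Complex.I * ζ') :=
      ((differentiableOn_gfun _ (Udom_strip h' t)).differentiableAt
        (isOpen_strip.mem_nhds (Udom_strip h' t))).hasDerivAt
    have h3 : HasDerivAt (fun ζ : ℂ => (t:ℂ) - Complex.I * ζ) (-Complex.I) ζ' := by
      simpa using ((hasDerivAt_id ζ').const_mul Complex.I).const_sub (t:ℂ)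
    exact (h2.comp ζ' h3).const_smul (t ^ (α - 1))

lemma normSq_exp_sub (t x : ℝ) : Complex.normSq (Complex.exp (t - Complex.I * x) - 1)
    = 1 - 2 * Real.exp t * Real.cos x + Real.exp (2 * t) := by
  have e : Complex.exp (t - Complex.I * x) =
      ((Real.exp t * Real.cos x : ℝ) : ℂ) - ((Real.exp t * Real.sin x : ℝ) : ℂ) * Complex.I := by
    rw [sub_eq_add_neg, Complex.exp_add, show -(Complex.I * (x:ℂ)) = ((-x : ℝ) : ℂ) * Complex.I by
      push_cast; ring, Complex.exp_mul_I]
    push_cast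
    simp
    ring
  rw [e, Complex.normSq_apply]
  simp only [Complex.sub_re, Complex.sub_im, Complex.mul_re, Complex.mul_im, Complex.ofReal_re,
    Complex.ofReal_im, Complex.I_re, Complex.I_im, Complex.one_re, Complex.one_im]
  have h2 : Real.exp (2 * t) = Real.exp t ^ 2 := by rw [← Real.exp_nat_mul]; norm_num
  rw [h2]
  linear_combination (Real.exp t ^ 2) * Real.sin_sq_add_cos_sq x

lemma re_inv_exp_sub (t x : ℝ) : ((Complex.exp (t - Complex.I * x) - 1)⁻¹).re
    = (Real.exp t * Real.cos x - 1) / (1 - 2 * Real.exp t * Real.cos x + Real.exp (2 * t)) := by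
  rw [Complex.inv_re, normSq_exp_sub]
  congr 1
  simp [Complex.exp_re]

/-- `P_t(x) = Re 1/(e^{t-ix}-1)`. -/
noncomputable def Pker (t x : ℝ) : ℝ := ((Complex.exp (t - Complex.I * x) - 1)⁻¹).re

lemma Kker_eq (α x : ℝ) (h : ¬ ∃ k : ℤ, x = 2 * π * k) :
    Kker α x = (1 / (π * Real.Gamma α)) * ∫ t in Set.Ioi (0:ℝ), t ^ (α - 1) * Pker t x := by
  unfold Kker Pker
  rw [if_neg h]
  simp only [re_inv_exp_sub, mul_div_assoc]

lemma Kker_of (α x : ℝ) (h : ∃ k : ℤ, x = 2 * π * k) : Kker α x = 0 := by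
  unfold Kker; rw [if_pos h]

lemma not_mult_of_small {x : ℝ} (h0 : x ≠ 0) (h : |x| < 6) : ¬ ∃ k : ℤ, x = 2 * π * k := by
  rintro ⟨k, hk⟩
  have h3 : |(k:ℝ)| < 1 := by
    by_contra h4
    push Not at h4
    rw [hk, abs_mul, abs_of_pos (by positivity : (0:ℝ) < 2 * π)] at h
    nlinarith [Real.pi_gt_d2]
  have : k = 0 := by
    have : |k| < 1 := by exact_mod_cast h3
    exact Int.abs_lt_one_iff.mp this
  apply h0; rw [hk, this]; simp

lemma Kker_neg (α x : ℝ) : Kker α (-x) = Kker α x := by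
  by_cases h : ∃ k : ℤ, x = 2 * π * k
  · rw [Kker_of α x h, Kker_of]
    obtain ⟨k, hk⟩ := h
    exact ⟨-k, by rw [hk]; push_cast; ring⟩
  · have h' : ¬ ∃ k : ℤ, -x = 2 * π * k := by
      rintro ⟨k, hk⟩
      exact h ⟨-k, by push_cast; linarith⟩
    unfold Kker
    rw [if_neg h, if_neg h', Real.cos_neg]

lemma Kker_periodic (α : ℝ) : Function.Periodic (Kker α) (2 * π) := by
  intro x
  by_cases h : ∃ k : ℤ, x = 2 * π * k
  · rw [Kker_of α x h, Kker_of]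
    obtain ⟨k, hk⟩ := h
    exact ⟨k + 1, by rw [hk]; push_cast; ring⟩
  · have h' : ¬ ∃ k : ℤ, x + 2 * π = 2 * π * k := by
      rintro ⟨k, hk⟩
      exact h ⟨k - 1, by push_cast; linarith⟩
    unfold Kker
    rw [if_neg h, if_neg h', Real.cos_add_two_pi]

/-- The singular constant. -/
noncomputable def Asing (α : ℝ) : ℝ := ∫ t in Ioi (0:ℝ), t ^ (α - 1) * (t / (t ^ 2 + 1))

lemma sing_integral {α x : ℝ} (hx : x ≠ 0) :
    ∫ t in Ioi (0:ℝ), t ^ (α - 1) * (t / (t ^ 2 + x ^ 2)) = |x| ^ (α - 1) * Asing α := by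
  have hx' : 0 < |x| := abs_pos.mpr hx
  have := integral_comp_mul_left_Ioi (fun t : ℝ => t ^ (α - 1) * (t / (t ^ 2 + x ^ 2))) 0 hx'
  rw [mul_zero, smul_eq_mul, inv_mul_eq_div, eq_div_iff hx'.ne'] at this
  rw [← this, Asing, mul_comm, ← integral_const_mul, ← integral_const_mul]
  refine setIntegral_congr_fun measurableSet_Ioi fun t ht => ?_
  have ht' : (0:ℝ) < t := ht
  rw [Real.mul_rpow hx'.le ht'.le, mul_pow, sq_abs]
  have hx2 : x ^ 2 = |x| * |x| := by rw [← sq, sq_abs]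
  have : x ^ 2 * t ^ 2 + x ^ 2 ≠ 0 := by positivity
  field_simp
  rw [hx2]
  field_simp

lemma sing_integrable {α x : ℝ} (h0 : 0 < α) (h1 : α < 1) (hx : x ≠ 0) :
    IntegrableOn (fun t : ℝ => t ^ (α - 1) * (t / (t ^ 2 + x ^ 2))) (Ioi 0) := by
  have hx2 : 0 < x ^ 2 := by positivity
  refine integrableOn_of_qwt_bound (E := ℝ) (C := max 1 (2 / x ^ 2)) h0 h1 ?_ ?_
  · apply Continuous.aestronglyMeasurable
    exact continuous_id.div (by fun_prop) fun t => by positivity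
  · intro t ht
    rw [Real.norm_of_nonneg (by positivity)]
    unfold qwt
    split_ifs with h2
    · rw [mul_one]
      refine le_trans ?_ (le_max_right _ _)
      gcongr
      nlinarith
    · calc t / (t ^ 2 + x ^ 2) ≤ 1 * t⁻¹ := by
            rw [div_le_iff₀ (by positivity)]
            field_simp
            linarith
        _ ≤ _ := by gcongr; exact le_max_left _ _

/-- The regular part of the kernel. -/
noncomputable def Sreg (α x : ℝ) : ℝ := (Gint α x).re

lemma mem_Udom_of_real {x : ℝ} (h : |x| < 6) : (x : ℂ) ∈ Udom := by
  refine ⟨by simpa using h, by simp; norm_num⟩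

lemma contDiffOn_Sreg {α : ℝ} (h0 : 0 < α) (h1 : α < 1) :
    ContDiffOn ℝ (⊤ : ℕ∞) (Sreg α) (Ioo (-6) 6) := by
  have hG : ContDiffOn ℝ (⊤ : ℕ∞) (Gint α) Udom :=
    ((differentiableOn_Gint h0 h1).contDiffOn isOpen_Udom).restrict_scalars ℝ
  have h2 : ContDiffOn ℝ (⊤ : ℕ∞) (fun x : ℝ => Gint α (x : ℂ)) (Ioo (-6) 6) :=
    hG.comp Complex.ofRealCLM.contDiff.contDiffOn fun x hx => mem_Udom_of_real (abs_lt.mpr hx)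
  exact Complex.reCLM.contDiff.comp_contDiffOn h2

lemma Pker_decomp {t x : ℝ} (ht : 0 < t) (hx : |x| < 6) :
    Pker t x = (gfun (t - Complex.I * x)).re + t / (t ^ 2 + x ^ 2) := by
  have hne : (t - Complex.I * x : ℂ) ≠ 0 := by
    intro h
    have := congrArg Complex.re h
    simp at this
    exact ht.ne' this
  rw [gfun_of_ne (Udom_strip (mem_Udom_of_real hx) t) hne, Pker, Complex.sub_re]
  have : ((t - Complex.I * x : ℂ)⁻¹).re = t / (t ^ 2 + x ^ 2) := by
    rw [Complex.inv_re, Complex.normSq_apply]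
    simp
    ring
  rw [this]; ring

lemma Kker_decomp {α x : ℝ} (h0 : 0 < α) (h1 : α < 1) (hx0 : x ≠ 0) (hx : |x| < 6) :
    Kker α x = (1 / (π * Real.Gamma α)) * (Asing α * |x| ^ (α - 1) + Sreg α x) := by
  rw [Kker_eq α x (not_mult_of_small hx0 hx)]
  congr 1
  have hi := integrableOn_gfun h0 h1 (mem_Udom_of_real hx)
  have hi2 : IntegrableOn (fun t : ℝ => t ^ (α - 1) * (gfun (t - Complex.I * x)).re) (Ioi 0) := by
    have := hi.integrable.re
    simp at this
    exact this
  have e1 : Sreg α x = ∫ t in Ioi (0:ℝ), t ^ (α - 1) * (gfun (t - Complex.I * x)).re := by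
    unfold Sreg Gint
    have := integral_re hi
    simp at this
    rw [this]
    simp
  rw [e1, mul_comm (Asing α), ← sing_integral hx0, ← integral_add (sing_integrable h0 h1 hx0) hi2]
  refine setIntegral_congr_fun measurableSet_Ioi fun t ht => ?_
  rw [Pker_decomp ht hx]; ring

lemma Kker_bound {α : ℝ} (h0 : 0 < α) (h1 : α < 1) :
    ∃ C : ℝ, 0 < C ∧ ∀ x : ℝ, |x| ≤ π → |Kker α x| ≤ C * |x| ^ (α - 1) := by
  have hpi6 : π < 6 := by linarith [Real.pi_lt_d2]
  obtain ⟨B, hB⟩ := isCompact_Icc.exists_bound_of_continuousOn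
    ((contDiffOn_Sreg h0 h1).continuousOn.mono
      (Icc_subset_Ioo (a₂ := (-6:ℝ)) (b₂ := 6) (a₁ := -π) (b₁ := π) (by linarith) hpi6))
  have hG : 0 < 1 / (π * Real.Gamma α) := by
    have := Real.Gamma_pos_of_pos h0; positivity
  refine ⟨(1 / (π * Real.Gamma α)) * (|Asing α| + |B| * π ^ (1 - α)) + 1, by positivity,
    fun x hx => ?_⟩
  by_cases hx0 : x = 0
  · rw [hx0, Kker_of _ _ ⟨0, by simp⟩, abs_zero]; positivity
  have hxp : 0 < |x| := abs_pos.mpr hx0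
  rw [Kker_decomp h0 h1 hx0 (by linarith), abs_mul, abs_of_pos hG]
  have h3 : 1 ≤ π ^ (1 - α) * |x| ^ (α - 1) := by
    rw [show α - 1 = -(1 - α) by ring, Real.rpow_neg hxp.le, ← div_eq_mul_inv,
      one_le_div (by positivity)]
    exact Real.rpow_le_rpow hxp.le hx (by linarith)
  have h4 : |Asing α * |x| ^ (α - 1) + Sreg α x| ≤
      (|Asing α| + |B| * π ^ (1 - α)) * |x| ^ (α - 1) := by
    refine (abs_add_le _ _).trans ?_
    rw [abs_mul, abs_of_pos (by positivity : 0 < |x| ^ (α - 1))]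
    have := hB x (abs_le.mp hx)
    rw [Real.norm_eq_abs] at this
    nlinarith [le_abs_self B, mul_le_mul_of_nonneg_left h3 (abs_nonneg B)]
  calc _ ≤ (1 / (π * Real.Gamma α)) * ((|Asing α| + |B| * π ^ (1 - α)) * |x| ^ (α - 1)) := by
        gcongr
    _ ≤ _ := by nlinarith [Real.rpow_nonneg hxp.le (α - 1)]

lemma Pker_measurable : Measurable (fun q : ℝ × ℝ => Pker q.1 q.2) := by
  unfold Pker
  fun_prop

lemma Kker_measurable (α : ℝ) : Measurable (Kker α) := by
  have hset : MeasurableSet {x : ℝ | ∃ k : ℤ, x = 2 * π * k} := by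
    have : {x : ℝ | ∃ k : ℤ, x = 2 * π * k} = Set.range (fun k : ℤ => 2 * π * (k:ℝ)) := by
      ext x; simp [eq_comm]
    rw [this]
    exact (Set.countable_range _).measurableSet
  have hm : Measurable (fun x : ℝ => (1 / (π * Real.Gamma α)) *
      ∫ t in Set.Ioi (0:ℝ), t ^ (α - 1) * Pker t x) := by
    apply Measurable.const_mul
    have : StronglyMeasurable (fun q : ℝ × ℝ => q.2 ^ (α - 1) * Pker q.2 q.1) := by
      apply Measurable.stronglyMeasurable
      have h2 : Measurable (fun q : ℝ × ℝ => Pker q.2 q.1) := by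
        unfold Pker; fun_prop
      have h4 : Measurable (fun q : ℝ × ℝ => q.2 ^ (α - 1)) := by fun_prop
      exact h4.mul h2
    have h3 := this.integral_prod_right' (ν := volume.restrict (Ioi (0:ℝ)))
    exact h3.measurable
  classical
  have : Kker α = fun x => if x ∈ {x : ℝ | ∃ k : ℤ, x = 2 * π * k} then 0 else
      (1 / (π * Real.Gamma α)) * ∫ t in Set.Ioi (0:ℝ), t ^ (α - 1) * Pker t x := by
    funext x
    by_cases h : ∃ k : ℤ, x = 2 * π * k
    · simp only [mem_setOf_eq]
      rw [Kker_of α x h, if_pos h]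
    · simp only [mem_setOf_eq]
      rw [Kker_eq α x h, if_neg h]
  rw [this]
  exact Measurable.ite hset measurable_const hm

lemma abs_rpow_intervalIntegrable {α : ℝ} (h0 : 0 < α) (a b : ℝ) :
    IntervalIntegrable (fun x : ℝ => |x| ^ (α - 1)) volume a b := by
  have hpos : ∀ c : ℝ, 0 ≤ c → IntervalIntegrable (fun x : ℝ => |x| ^ (α - 1)) volume 0 c := by
    intro c hc
    refine (intervalIntegral.intervalIntegrable_rpow' (r := α - 1) (by linarith)).congr ?_
    intro x hx
    rw [uIoc_of_le hc] at hx
    simp [abs_of_pos hx.1]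
  have hall : ∀ c : ℝ, IntervalIntegrable (fun x : ℝ => |x| ^ (α - 1)) volume 0 c := by
    intro c
    rcases le_total 0 c with h | h
    · exact hpos c h
    · have := (hpos (-c) (by linarith)).comp_sub_left 0
      simpa using this
  exact (hall a).symm.trans (hall b)

lemma Kker_intervalIntegrable {α : ℝ} (h0 : 0 < α) (h1 : α < 1) (a b : ℝ) :
    IntervalIntegrable (Kker α) volume a b := by
  have h : IntervalIntegrable (Kker α) volume (-π) (-π + 2 * π) := by
    obtain ⟨C, hC, hb⟩ := Kker_bound h0 h1
    have e : -π + 2 * π = π := by ring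
    rw [e]
    refine ((abs_rpow_intervalIntegrable h0 (-π) π).const_mul C).mono_fun
      (Kker_measurable α).aestronglyMeasurable ?_
    rw [uIoc_of_le (by linarith [Real.pi_pos])]
    refine (ae_restrict_iff' measurableSet_Ioc).mpr (ae_of_all _ fun x hx => ?_)
    simp only [Real.norm_eq_abs]
    exact (hb x (abs_le.mpr ⟨hx.1.le, hx.2⟩)).trans (le_abs_self _)
  exact (Kker_periodic α).intervalIntegrable (by positivity) h a b

lemma Pker_hasSum {t : ℝ} (ht : 0 < t) (x : ℝ) :
    HasSum (fun k : ℕ => Real.exp (-t) ^ (k + 1) * Real.cos ((k + 1 : ℕ) * x)) (Pker t x) := by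
  set z : ℂ := Complex.exp (-(t - Complex.I * x)) with hz
  have hnorm : ‖z‖ < 1 := by
    rw [hz, Complex.norm_exp]; simp [ht]
  have hz1 : z ≠ 1 := by intro h; rw [h] at hnorm; simp at hnorm
  have h1 := (hasSum_geometric_of_norm_lt_one hnorm).mul_left z
  have e : z * (1 - z)⁻¹ = (Complex.exp (t - Complex.I * x) - 1)⁻¹ := by
    have h2 : Complex.exp (t - Complex.I * x) = z⁻¹ := by rw [hz, Complex.exp_neg, inv_inv]
    have h3 : z ≠ 0 := Complex.exp_ne_zero _
    have h4 : 1 - z ≠ 0 := sub_ne_zero.mpr hz1.symm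
    rw [h2, show z⁻¹ - 1 = (1 - z) / z by field_simp, inv_div, div_eq_mul_inv]
  rw [e] at h1
  have h5 := Complex.hasSum_re h1
  unfold Pker
  convert! h5 using 2 with k
  rw [← pow_succ', hz, ← Complex.exp_nat_mul, Complex.exp_re, ← Real.exp_nat_mul]
  simp

lemma integral_cos_mul_cos (k : ℕ) :
    ∫ x in (-π)..π, Real.cos ((k + 1 : ℕ) * x) * Real.cos x = if k = 0 then π else 0 := by
  have hI : ∀ m : ℕ, m ≠ 0 → ∫ x in (-π)..π, Real.cos (m * x) = 0 := by
    intro m hm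
    have hm' : (m:ℝ) ≠ 0 := by exact_mod_cast hm
    rw [intervalIntegral.integral_comp_mul_left (fun x => Real.cos x) hm', integral_cos]
    simp [Real.sin_nat_mul_pi]
  split_ifs with h
  · subst h
    have : ∀ x : ℝ, Real.cos ((0 + 1 : ℕ) * x) * Real.cos x = Real.cos x ^ 2 := by
      intro x; simp [sq]
    simp only [this]
    rw [integral_cos_sq]; simp
  · have e : ∀ x : ℝ, Real.cos ((k + 1 : ℕ) * x) * Real.cos x
        = (1 / 2) * (Real.cos ((k + 2 : ℕ) * x) + Real.cos ((k : ℕ) * x)) := by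
      intro x
      have h1 : ((k + 2 : ℕ) : ℝ) * x = (k + 1 : ℕ) * x + x := by push_cast; ring
      have h2 : (k : ℝ) * x = (k + 1 : ℕ) * x - x := by push_cast; ring
      rw [h1, h2, Real.cos_add, Real.cos_sub]; ring
    simp only [e]
    rw [intervalIntegral.integral_const_mul, intervalIntegral.integral_add
      (Continuous.intervalIntegrable (by fun_prop) _ _)
      (Continuous.intervalIntegrable (by fun_prop) _ _), hI _ (by omega), hI _ h]
    simp

lemma Pker_integral {t : ℝ} (ht : 0 < t) :
    ∫ x in (-π)..π, Pker t x * Real.cos x = π * Real.exp (-t) := by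
  have hr : Real.exp (-t) < 1 := by simpa using ht
  let f : ℕ → C(ℝ, ℝ) := fun k =>
    ⟨fun x => Real.exp (-t) ^ (k + 1) * Real.cos ((k + 1 : ℕ) * x) * Real.cos x, by fun_prop⟩
  have hs : Summable fun k => ‖(f k).restrict (⟨uIcc (-π) π, isCompact_uIcc⟩ :
      TopologicalSpace.Compacts ℝ)‖ := by
    refine Summable.of_nonneg_of_le (fun _ => norm_nonneg _) (fun k => ?_)
      ((summable_geometric_of_lt_one (Real.exp_pos (-t)).le hr).mul_left (Real.exp (-t)))
    rw [ContinuousMap.norm_le _ (by positivity)]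
    intro x
    simp only [f, ContinuousMap.restrict_apply, ContinuousMap.coe_mk]
    rw [norm_mul, norm_mul, Real.norm_of_nonneg (by positivity), pow_succ']
    have h1 := Real.abs_cos_le_one ((k + 1 : ℕ) * (x:ℝ))
    have h2 := Real.abs_cos_le_one (x:ℝ)
    rw [Real.norm_eq_abs, Real.norm_eq_abs]
    calc _ ≤ Real.exp (-t) * Real.exp (-t) ^ k * 1 * 1 := by gcongr
      _ = _ := by ring
  have h := intervalIntegral.hasSum_intervalIntegral_of_summable_norm hs
  have h2 : ∀ x, ∑' k, f k x = Pker t x * Real.cos x := by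
    intro x
    exact ((Pker_hasSum ht x).mul_right (Real.cos x)).tsum_eq
  simp only [h2] at h
  have h3 : ∀ k, ∫ x in (-π)..π, f k x = if k = 0 then π * Real.exp (-t) else 0 := by
    intro k
    have : ∀ x, f k x = Real.exp (-t) ^ (k + 1) * (Real.cos ((k + 1 : ℕ) * x) * Real.cos x) := by
      intro x; simp only [f, ContinuousMap.coe_mk]; ring
    simp only [this]
    rw [intervalIntegral.integral_const_mul, integral_cos_mul_cos]
    split_ifs with h0
    · subst h0; simp; ring
    · simp
  simp only [h3] at h
  exact h.unique (hasSum_ite_eq 0 _)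

lemma Pker_bound {α t x : ℝ} (h0 : 0 < α) (h1 : α < 1) (ht : 0 < t) (hx0 : x ≠ 0) (hx : |x| ≤ π) :
    |Pker t x| ≤ (t * Real.exp (t / 2)) ^ (-(α / 2)) * (2 / π * |x|) ^ (-(1 - α / 2)) := by
  have hxp : 0 < |x| := abs_pos.mpr hx0
  set w := ‖Complex.exp (t - Complex.I * x) - 1‖ with hw
  have hw2 : w ^ 2 = 1 - 2 * Real.exp t * Real.cos x + Real.exp (2 * t) := by
    rw [← normSq_exp_sub, Complex.normSq_eq_norm_sq]
  have h2 : Real.exp (2 * t) = Real.exp t ^ 2 := by rw [← Real.exp_nat_mul]; norm_num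
  have hle : Real.cos x ≤ 1 - 2 / π ^ 2 * x ^ 2 := Real.cos_le_one_sub_mul_cos_sq hx
  have he1 : 1 ≤ Real.exp t := Real.one_le_exp ht.le
  have hws : w ^ 2 = (Real.exp t - 1) ^ 2 + 2 * Real.exp t * (1 - Real.cos x) := by
    rw [hw2, h2]; ring
  have hw0 : 0 ≤ w := norm_nonneg _
  have hA : t * Real.exp (t / 2) ≤ w := by
    have hs : t / 2 ≤ Real.sinh (t / 2) := Real.self_le_sinh_iff.mpr (by linarith)
    have e2 : Real.exp t = Real.exp (t / 2) * Real.exp (t / 2) := by rw [← Real.exp_add]; ring_nf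
    have hs2 : Real.exp t - 1 = Real.exp (t / 2) * (2 * Real.sinh (t / 2)) := by
      rw [Real.sinh_eq, e2]
      have : Real.exp (t / 2) * Real.exp (-(t / 2)) = 1 := by rw [← Real.exp_add]; simp
      linear_combination this
    have : t * Real.exp (t / 2) ≤ Real.exp t - 1 := by
      rw [hs2]; nlinarith [Real.exp_pos (t / 2)]
    refine this.trans (abs_le_of_sq_le_sq' ?_ hw0).2
    rw [hws]
    nlinarith [Real.cos_le_one x]
  have hB : 2 / π * |x| ≤ w := by
    refine (abs_le_of_sq_le_sq' ?_ hw0).2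
    rw [hws, mul_pow, sq_abs]
    have h5 : 2 / π ^ 2 * x ^ 2 ≤ 1 - Real.cos x := by linarith
    have h6 : (2 / π) ^ 2 * x ^ 2 = 2 * (2 / π ^ 2 * x ^ 2) := by field_simp
    rw [h6]
    have h7 : 0 ≤ 1 - Real.cos x := by linarith [Real.cos_le_one x]
    nlinarith [sq_nonneg (Real.exp t - 1)]
  have hBp : 0 < 2 / π * |x| := by positivity
  have hwp : 0 < w := lt_of_lt_of_le hBp hB
  have hP : |Pker t x| ≤ w⁻¹ := by
    unfold Pker
    refine (Complex.abs_re_le_norm _).trans ?_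
    rw [norm_inv]
  refine hP.trans ?_
  have e : w⁻¹ = w ^ (-(α / 2)) * w ^ (-(1 - α / 2)) := by
    rw [← Real.rpow_add hwp, ← Real.rpow_neg_one]; congr 1; ring
  rw [e]
  apply mul_le_mul
  · exact Real.rpow_le_rpow_of_nonpos (by positivity) hA (by linarith)
  · exact Real.rpow_le_rpow_of_nonpos hBp hB (by linarith)
  · positivity
  · positivity

lemma Kker_cos {α : ℝ} (h0 : 0 < α) (h1 : α < 1) :
    ∫ x in (-π)..π, Kker α x * Real.cos x = 1 := by
  have hpp := Real.pi_pos
  have hG := Real.Gamma_pos_of_pos h0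
  have hint : Integrable (fun q : ℝ × ℝ => q.2 ^ (α - 1) * Pker q.2 q.1 * Real.cos q.1)
      ((volume.restrict (Ioc (-π) π)).prod (volume.restrict (Ioi (0:ℝ)))) := by
    have hb1 : IntegrableOn (fun x : ℝ => (2 / π * |x|) ^ (-(1 - α / 2))) (Ioc (-π) π) := by
      rw [← intervalIntegrable_iff_integrableOn_Ioc_of_le (by linarith)]
      have := (abs_rpow_intervalIntegrable (α := α / 2) (by linarith) (-π) π).const_mul
        ((2 / π) ^ (-(1 - α / 2)))
      refine this.congr ?_
      intro x _
      simp only []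
      rw [Real.mul_rpow (by positivity) (by positivity)]
      congr 2; ring
    have hb2 : IntegrableOn (fun t : ℝ => t ^ (α - 1) * (t * Real.exp (t / 2)) ^ (-(α / 2)))
        (Ioi 0) := by
      have := integrableOn_rpow_mul_exp_neg_mul_rpow (p := 1) (s := α / 2 - 1) (b := α / 4)
        (by linarith) one_pos (by linarith)
      refine this.congr_fun ?_ measurableSet_Ioi
      intro t ht
      have ht' : (0:ℝ) < t := ht
      simp only []
      rw [Real.mul_rpow ht'.le (Real.exp_pos _).le, ← mul_assoc, ← Real.rpow_add ht',
        ← Real.exp_mul, Real.rpow_one]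
      congr 2 <;> ring
    have hb := Integrable.mul_prod hb1 hb2
    refine hb.mono' ?_ ?_
    · apply Measurable.aestronglyMeasurable
      unfold Pker
      fun_prop
    · rw [Measure.prod_restrict]
      have hz : ∀ᵐ q : ℝ × ℝ ∂(volume.prod volume), q.1 ≠ 0 := by
        have : ∀ᵐ x : ℝ, x ≠ 0 := by
          simp [ae_iff]
        exact Measure.quasiMeasurePreserving_fst.ae this
      refine (ae_restrict_iff' (measurableSet_Ioc.prod measurableSet_Ioi)).mpr ?_
      filter_upwards [hz] with q hq0 hq
      have ht : (0:ℝ) < q.2 := hq.2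
      have hP := Pker_bound h0 h1 ht hq0 (abs_le.mpr ⟨hq.1.1.le, hq.1.2⟩)
      rw [norm_mul, norm_mul, Real.norm_of_nonneg (by positivity), Real.norm_eq_abs,
        Real.norm_eq_abs]
      calc q.2 ^ (α - 1) * |Pker q.2 q.1| * |Real.cos q.1|
          ≤ q.2 ^ (α - 1) * ((q.2 * Real.exp (q.2 / 2)) ^ (-(α / 2))
            * (2 / π * |q.1|) ^ (-(1 - α / 2))) * 1 := by
            gcongr; exact Real.abs_cos_le_one _
        _ = _ := by ring
  have e1 : ∫ x in (-π)..π, Kker α x * Real.cos x = (1 / (π * Real.Gamma α)) *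
      ∫ x in Ioc (-π) π, ∫ t in Ioi (0:ℝ), t ^ (α - 1) * Pker t x * Real.cos x := by
    rw [intervalIntegral.integral_of_le (by linarith), ← integral_const_mul]
    refine integral_congr_ae ?_
    have : ∀ᵐ x : ℝ, x ≠ 0 := by simp [ae_iff]
    refine (ae_restrict_iff' measurableSet_Ioc).mpr ?_
    filter_upwards [this] with x hx0 hx
    rw [Kker_eq α x (not_mult_of_small hx0 ?_), integral_mul_const, mul_assoc]
    have : |x| ≤ π := abs_le.mpr ⟨hx.1.le, hx.2⟩
    linarith [Real.pi_lt_d2]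
  rw [e1, integral_integral_swap hint]
  have e2 : ∀ t ∈ Ioi (0:ℝ), ∫ x in Ioc (-π) π, t ^ (α - 1) * Pker t x * Real.cos x
      = π * (Real.exp (-t) * t ^ (α - 1)) := by
    intro t ht
    simp only [mul_assoc]
    rw [integral_const_mul, ← intervalIntegral.integral_of_le (by linarith), Pker_integral ht]
    ring
  rw [setIntegral_congr_fun measurableSet_Ioi e2, integral_const_mul,
    ← Real.Gamma_eq_integral h0]
  field_simp

theorem Kker_sin (α : ℝ) : ∫ x in (-π)..π, Kker α x * Real.sin x = 0 := by
  have h := intervalIntegral.integral_comp_neg (a := -π) (b := π) (fun x => Kker α x * Real.sin x)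
  simp only [Kker_neg, Real.sin_neg, mul_neg, intervalIntegral.integral_neg, neg_neg] at h
  linarith

theorem Kker_shift_cos {α : ℝ} (h0 : 0 < α) (h1 : α < 1) (y : ℝ) :
    ∫ x in (-π)..π, Kker α (x - y) * Real.cos x = Real.cos y := by
  have hper : Function.Periodic (fun z => Kker α z * Real.cos (z + y)) (2 * π) := by
    intro z
    show Kker α (z + 2 * π) * Real.cos (z + 2 * π + y) = _
    rw [Kker_periodic α z, show z + 2 * π + y = z + y + 2 * π by ring, Real.cos_add_two_pi]
  have e1 := intervalIntegral.integral_comp_sub_right (a := -π) (b := π)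
    (fun z => Kker α z * Real.cos (z + y)) y
  simp only [sub_add_cancel] at e1
  rw [e1]
  have e2 := hper.intervalIntegral_add_eq (-π - y) (-π)
  rw [show -π - y + 2 * π = π - y by ring, show -π + 2 * π = π by ring] at e2
  rw [e2]
  have i1 : IntervalIntegrable (fun x => Kker α x * Real.cos x) volume (-π) π :=
    (Kker_intervalIntegrable h0 h1 _ _).mul_continuousOn Real.continuous_cos.continuousOn
  have i2 : IntervalIntegrable (fun x => Kker α x * Real.sin x) volume (-π) π :=
    (Kker_intervalIntegrable h0 h1 _ _).mul_continuousOn Real.continuous_sin.continuousOn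
  have e3 : (fun z => Kker α z * Real.cos (z + y)) =
      fun z => Kker α z * Real.cos z * Real.cos y - Kker α z * Real.sin z * Real.sin y := by
    funext z; rw [Real.cos_add]; ring
  rw [e3, intervalIntegral.integral_sub (i1.mul_const _) (i2.mul_const _),
    intervalIntegral.integral_mul_const, intervalIntegral.integral_mul_const, Kker_cos h0 h1,
    Kker_sin]
  ring

theorem Kker_conv_integrable {α : ℝ} (h0 : 0 < α) (h1 : α < 1) {φ : ℝ → ℝ} (hφ : Continuous φ) :
    Integrable (fun q : ℝ × ℝ => Kker α (q.1 - q.2) * φ q.2)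
      ((volume.restrict (Ioc (-π) π)).prod (volume.restrict (Ioc (-π) π))) := by
  have hf : Integrable ((Ioc (-π) π).indicator φ) :=
    (integrable_indicator_iff measurableSet_Ioc).2 (hφ.integrableOn_Ioc)
  have hK : Integrable ((Ioc (-(2*π)) (2*π)).indicator (Kker α)) := by
    refine (integrable_indicator_iff measurableSet_Ioc).2 ?_
    have := Kker_intervalIntegrable h0 h1 (-(2*π)) (2*π)
    rwa [intervalIntegrable_iff_integrableOn_Ioc_of_le (by linarith [Real.pi_pos])] at this
  have h := hf.convolution_integrand (ContinuousLinearMap.mul ℝ ℝ) hK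
  rw [Measure.prod_restrict]
  have h2 := h.integrableOn (s := Ioc (-π) π ×ˢ Ioc (-π) π)
  refine (h2.congr_fun_ae ?_)
  have hd : ∀ᵐ q : ℝ × ℝ ∂(volume.prod volume).restrict (Ioc (-π) π ×ˢ Ioc (-π) π),
      q ∈ Ioc (-π) π ×ˢ Ioc (-π) π :=
    ae_restrict_mem (measurableSet_Ioc.prod measurableSet_Ioc)
  filter_upwards [hd] with q hq
  have hq1 := hq.1
  have hq2 := hq.2
  simp only [mem_Ioc] at hq1 hq2
  have hm : q.1 - q.2 ∈ Ioc (-(2*π)) (2*π) := ⟨by linarith, by linarith⟩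
  simp only [ContinuousLinearMap.mul_apply', indicator_of_mem hq.2, indicator_of_mem hm]
  ring

theorem eigen {α : ℝ} (h0 : 0 < α) (h1 : α < 1) {φ : ℝ → ℝ} (hφ : Continuous φ) :
    ∫ x in (-π)..π, (∫ y in (-π)..π, Kker α (x - y) * φ y) * Real.cos x
      = ∫ y in (-π)..π, φ y * Real.cos y := by
  have hle : -π ≤ π := by linarith [Real.pi_pos]
  have hi := Kker_conv_integrable h0 h1 hφ
  have hi2 : Integrable (fun q : ℝ × ℝ => (Kker α (q.1 - q.2) * φ q.2) * Real.cos q.1)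
      ((volume.restrict (Ioc (-π) π)).prod (volume.restrict (Ioc (-π) π))) := by
    refine hi.mul_bdd (c := 1) (by fun_prop) (Eventually.of_forall fun q => ?_)
    simpa using Real.abs_cos_le_one q.1
  have e1 : ∀ x, (∫ y in (-π)..π, Kker α (x - y) * φ y) * Real.cos x
      = ∫ y in (-π)..π, (Kker α (x - y) * φ y) * Real.cos x := fun x => by
    rw [intervalIntegral.integral_mul_const]
  simp_rw [e1]
  simp only [intervalIntegral.integral_of_le hle]
  rw [integral_integral_swap hi2]
  refine integral_congr_ae (Eventually.of_forall fun y => ?_)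
  have := Kker_shift_cos h0 h1 y
  rw [intervalIntegral.integral_of_le hle] at this
  show ∫ x in Ioc (-π) π, Kker α (x - y) * φ y * Real.cos x = φ y * Real.cos y
  rw [← this, ← integral_const_mul]
  congr 1; funext x; ring

theorem mono_Icc {φ : ℝ → ℝ} (hc : Continuous φ) (hm : MonotoneOn φ (Ioo (-π) 0)) :
    MonotoneOn φ (Icc (-π) 0) := by
  intro a ha b hb hab
  have hpi := Real.pi_pos
  have t : ∀ a : ℝ, Tendsto (fun s : ℝ => φ ((1 - s) * a + s * (-(π/2)))) (𝓝[>] 0) (𝓝 (φ a)) := by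
    intro a
    have : Continuous (fun s : ℝ => φ ((1 - s) * a + s * (-(π/2)))) := by fun_prop
    have h2 := (this.tendsto 0).mono_left (nhdsWithin_le_nhds (s := Ioi 0))
    simpa using h2
  refine le_of_tendsto_of_tendsto (t a) (t b) ?_
  filter_upwards [Ioo_mem_nhdsGT (show (0:ℝ) < 1 by norm_num)] with s hs
  obtain ⟨s0, s1⟩ := hs
  have key : ∀ a ∈ Icc (-π) (0:ℝ), (1 - s) * a + s * (-(π/2)) ∈ Ioo (-π) (0:ℝ) := by
    intro a ha
    constructor
    · nlinarith [mul_nonneg (sub_nonneg.2 s1.le) (sub_nonneg.2 ha.1), mul_pos s0 hpi]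
    · nlinarith [mul_nonneg (sub_nonneg.2 s1.le) (sub_nonneg.2 ha.2), mul_pos s0 hpi]
  refine hm (key a ha) (key b hb) ?_
  have := mul_le_mul_of_nonneg_left hab (sub_nonneg.2 s1.le)
  linarith

theorem exists_rep {φ : ℝ → ℝ} (hper : Function.Periodic φ (2 * π)) (hev : ∀ x, φ (-x) = φ x)
    (x : ℝ) : ∃ y ∈ Icc (-π) (0:ℝ), φ x = φ y := by
  have hpi := Real.pi_pos
  obtain ⟨y, hy, h⟩ := hper.exists_mem_Ico (by positivity) x (-π)
  rw [h]
  rcases le_total y 0 with h0 | h0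
  · exact ⟨y, ⟨hy.1, h0⟩, rfl⟩
  · exact ⟨-y, ⟨by linarith [hy.2], by linarith⟩, (hev y).symm⟩

theorem cheb_pt {g : ℝ → ℝ} (hev : ∀ x, g (-x) = g x) (hm : MonotoneOn g (Icc (-π) 0))
    {x : ℝ} (hx : x ∈ Icc (-π) π) : 0 ≤ (g x - g (-(π/2))) * Real.cos x := by
  have hpi := Real.pi_pos
  wlog h0 : x ≤ 0 generalizing x
  · have := this (x := -x) ⟨by linarith [hx.2], by linarith [hx.1]⟩ (by linarith)
    rwa [hev, Real.cos_neg] at this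
  have hc : -(π/2) ∈ Icc (-π) (0:ℝ) := ⟨by linarith, by linarith⟩
  rcases le_total x (-(π/2)) with h | h
  · have h1 := hm ⟨hx.1, h0⟩ hc h
    have h2 : Real.cos x ≤ 0 := by
      rw [← Real.cos_neg]
      exact Real.cos_nonpos_of_pi_div_two_le_of_le (by linarith) (by linarith [hx.1])
    nlinarith
  · have h1 := hm hc ⟨hx.1, h0⟩ h
    exact mul_nonneg (by linarith) (Real.cos_nonneg_of_mem_Icc ⟨by linarith, by linarith⟩)

theorem cheb_int {g : ℝ → ℝ} (hc : Continuous g) :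
    ∫ x in (-π)..π, g x * Real.cos x = ∫ x in (-π)..π, (g x - g (-(π/2))) * Real.cos x := by
  have : ∀ x, (g x - g (-(π/2))) * Real.cos x = g x * Real.cos x - g (-(π/2)) * Real.cos x :=
    fun x => by ring
  simp_rw [this]
  rw [intervalIntegral.integral_sub ((by fun_prop : Continuous _).intervalIntegrable _ _)
    ((by fun_prop : Continuous _).intervalIntegrable _ _)]
  simp

theorem cheb {g : ℝ → ℝ} (hc : Continuous g) (hev : ∀ x, g (-x) = g x)
    (hm : MonotoneOn g (Icc (-π) 0)) : 0 ≤ ∫ x in (-π)..π, g x * Real.cos x := by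
  rw [cheb_int hc]
  exact intervalIntegral.integral_nonneg (by linarith [Real.pi_pos]) fun x hx => cheb_pt hev hm hx

theorem min_neg {φ : ℝ → ℝ} (hc : Continuous φ) (hper : Function.Periodic φ (2 * π))
    (hev : ∀ x, φ (-x) = φ x) (hm : MonotoneOn φ (Icc (-π) 0)) (hmean : ∫ y in (-π)..π, φ y = 0)
    (hnt : ∃ x, φ x ≠ 0) :
    φ (-π) < 0 ∧ 0 ≤ φ 0 ∧ ∀ x, φ (-π) ≤ φ x ∧ φ x ≤ φ 0 := by
  have hpi := Real.pi_pos
  have hb : ∀ x, φ (-π) ≤ φ x ∧ φ x ≤ φ 0 := by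
    intro x
    obtain ⟨y, hy, h⟩ := exists_rep hper hev x
    rw [h]
    exact ⟨hm ⟨le_rfl, by linarith⟩ hy hy.1, hm hy ⟨by linarith, le_rfl⟩ hy.2⟩
  refine ⟨?_, ?_, hb⟩
  · by_contra hcon
    push Not at hcon
    obtain ⟨x, hx⟩ := hnt
    obtain ⟨y, hy, h⟩ := exists_rep hper hev x
    have : 0 < ∫ y in (-π)..π, φ y := by
      refine intervalIntegral.integral_pos (by linarith) hc.continuousOn
        (fun z _ => hcon.trans (hb z).1) ⟨y, ⟨hy.1, by linarith [hy.2]⟩, ?_⟩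
      rw [← h]
      exact lt_of_le_of_ne (hcon.trans (hb x).1) hx.symm
    linarith
  · have : ∫ y in (-π)..π, φ y ≤ ∫ y in (-π)..π, φ 0 :=
      intervalIntegral.integral_mono_on (by linarith) (hc.intervalIntegrable _ _)
        (by simp) fun x _ => (hb x).2
    rw [hmean, intervalIntegral.integral_const, smul_eq_mul] at this
    by_contra hcon
    push Not at hcon
    nlinarith

theorem cheb_strict {φ : ℝ → ℝ} (hc : Continuous φ) (hper : Function.Periodic φ (2 * π))
    (hev : ∀ x, φ (-x) = φ x) (hm : MonotoneOn φ (Icc (-π) 0)) (hmean : ∫ y in (-π)..π, φ y = 0)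
    (hnt : ∃ x, φ x ≠ 0) : 0 < ∫ x in (-π)..π, φ x * Real.cos x := by
  have hpi := Real.pi_pos
  obtain ⟨h1, h2, h3⟩ := min_neg hc hper hev hm hmean hnt
  rw [cheb_int hc]
  have hcc : ContinuousOn (fun x => (φ x - φ (-(π/2))) * Real.cos x) (Icc (-π) π) := by fun_prop
  rcases lt_or_ge (φ (-(π/2))) (φ 0) with h | h
  · refine intervalIntegral.integral_pos (by linarith) hcc
      (fun z hz => cheb_pt hev hm ⟨hz.1.le, hz.2⟩) ⟨0, ⟨by linarith, by linarith⟩, ?_⟩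
    simp; exact h
  · refine intervalIntegral.integral_pos (by linarith) hcc
      (fun z hz => cheb_pt hev hm ⟨hz.1.le, hz.2⟩) ⟨-π, ⟨by linarith, by linarith⟩, ?_⟩
    simp only [Real.cos_neg, Real.cos_pi]
    linarith

theorem eq_cos {α c : ℝ} (h0 : 0 < α) (h1 : α < 1) {n φ : ℝ → ℝ} (hn : Continuous n)
    (hs : IsSteadySolution α c n φ) :
    ∫ x in (-π)..π, φ x * Real.cos x = c * (∫ x in (-π)..π, φ x * Real.cos x)
      - ∫ x in (-π)..π, n (φ x) * Real.cos x := by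
  obtain ⟨hc, hper, hmean, heq⟩ := hs
  have := eigen h0 h1 hc
  simp_rw [heq] at this
  set μ := (1 / (2 * π)) * ∫ y in (-π)..π, n (φ y)
  have e : ∀ x, (c * φ x - n (φ x) + μ) * Real.cos x =
    c * (φ x * Real.cos x) - n (φ x) * Real.cos x + μ * Real.cos x := fun x => by ring
  simp_rw [e] at this
  rw [intervalIntegral.integral_add ((by fun_prop : Continuous _).intervalIntegrable _ _)
    ((by fun_prop : Continuous _).intervalIntegrable _ _),
    intervalIntegral.integral_sub ((by fun_prop : Continuous _).intervalIntegrable _ _)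
    ((by fun_prop : Continuous _).intervalIntegrable _ _)] at this
  rw [intervalIntegral.integral_const_mul, intervalIntegral.integral_const_mul, integral_cos] at this
  simp only [Real.sin_neg, Real.sin_pi, neg_zero, sub_zero, mul_zero, add_zero] at this
  exact this.symm

theorem nSgn_cont {p : ℝ} (hp : 1 < p) : Continuous (nSgn p) := by
  unfold nSgn
  exact continuous_id.mul (continuous_abs.rpow_const fun x => Or.inr (by linarith))

theorem nAbs_cont {p : ℝ} (hp : 1 < p) : Continuous (nAbs p) := by
  unfold nAbs
  exact (continuous_abs.rpow_const fun x => Or.inr (by linarith))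

theorem nSgn_mono {p : ℝ} (hp : 1 < p) : Monotone (nSgn p) := by
  unfold nSgn
  intro a b hab
  show a * |a|^(p-1) ≤ b * |b|^(p-1)
  have hp' : 0 ≤ p - 1 := by linarith
  rcases le_total 0 a with ha | ha
  · have : |a| ≤ |b| := by rw [abs_of_nonneg ha, abs_of_nonneg (ha.trans hab)]; exact hab
    exact mul_le_mul hab (Real.rpow_le_rpow (abs_nonneg _) this hp') (by positivity) (ha.trans hab)
  · rcases le_total 0 b with hb | hb
    · have : a * |a|^(p-1) ≤ 0 := mul_nonpos_of_nonpos_of_nonneg ha (by positivity)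
      exact this.trans (by positivity)
    · have : |b| ≤ |a| := by rw [abs_of_nonpos ha, abs_of_nonpos hb]; linarith
      have h := mul_le_mul (show -b ≤ -a by linarith)
        (Real.rpow_le_rpow (abs_nonneg _) this hp') (by positivity) (by linarith)
      linarith

theorem sgn_bound {α p c : ℝ} (h0 : 0 < α) (h1 : α < 1) (hp : 1 < p) {φ : ℝ → ℝ}
    (hnt : ∃ x, φ x ≠ 0) (hev : ∀ x, φ (-x) = φ x) (hm : MonotoneOn φ (Ioo (-π) 0))
    (hs : IsSteadySolution α c (nSgn p) φ) : 1 ≤ c := by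
  have heq := eq_cos h0 h1 (nSgn_cont hp) hs
  obtain ⟨hc, hper, hmean, -⟩ := hs
  have hm' := mono_Icc hc hm
  have h2 := cheb_strict hc hper hev hm' hmean hnt
  have h3 := cheb (g := fun x => nSgn p (φ x)) ((nSgn_cont hp).comp hc)
    (fun x => by simp only [hev]) (fun a ha b hb hab => nSgn_mono hp (hm' ha hb hab))
  by_contra hcon
  push Not at hcon
  nlinarith

/-- tangent-line monotonicity -/
theorem g_mono {p m : ℝ} (hp : 1 < p) (hm : 0 ≤ m) :
    MonotoneOn (fun x : ℝ => p * m ^ (p - 1) * x + nAbs p x) (Ici (-m)) := by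
  unfold nAbs
  have hp' : 0 ≤ p - 1 := by linarith
  have key : ∀ A B : ℝ, 0 ≤ A → 0 ≤ B → A ≤ m → A ^ p - B ^ p ≤ p * m ^ (p - 1) * (A - B) ∨ A ≤ B := by
    intro A B hA hB hAm
    rcases le_or_gt A B with h | h
    · exact Or.inr h
    left
    have hApos : 0 < A := lt_of_le_of_lt hB h
    have hb := one_add_mul_self_le_rpow_one_add (s := B / A - 1)
      (by have : 0 ≤ B / A := by positivity
          linarith) hp.le
    have e : (1 + (B / A - 1)) = B / A := by ring
    rw [e, Real.div_rpow hB hA] at hb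
    have hAp : 0 < A ^ p := by positivity
    rw [le_div_iff₀ hAp] at hb
    have e2 : A ^ p = A ^ (p - 1) * A := by
      rw [← Real.rpow_add_one hApos.ne']; ring_nf
    have e3 : (1 + p * (B / A - 1)) * A ^ p = A ^ p + p * A ^ (p - 1) * (B - A) := by
      rw [e2]; field_simp
    have h4 : A ^ (p - 1) ≤ m ^ (p - 1) := Real.rpow_le_rpow hA hAm hp'
    have h5 : p * A ^ (p - 1) * (A - B) ≤ p * m ^ (p - 1) * (A - B) := by
      apply mul_le_mul_of_nonneg_right _ (by linarith)
      exact mul_le_mul_of_nonneg_left h4 (by linarith)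
    linarith
  intro a ha b hb hab
  simp only [mem_Ici] at ha hb
  show p * m ^ (p - 1) * a + |a| ^ p ≤ p * m ^ (p - 1) * b + |b| ^ p
  have hk : 0 ≤ p * m ^ (p - 1) := by positivity
  have hmul := mul_le_mul_of_nonneg_left hab hk
  rcases le_or_gt (|a|) (|b|) with h | h
  · have := Real.rpow_le_rpow (abs_nonneg _) h (by linarith : 0 ≤ p)
    linarith
  · have ha0 : a < 0 := by
      by_contra hcon
      push Not at hcon
      rw [abs_of_nonneg hcon, abs_of_nonneg (hcon.trans hab)] at h
      linarith
    have hle : |a| - |b| ≤ b - a := by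
      rw [abs_of_neg ha0]; linarith [neg_abs_le b, le_abs_self b]
    rcases key |a| |b| (abs_nonneg _) (abs_nonneg _) (by rw [abs_of_neg ha0]; linarith) with h2 | h2
    · have := mul_le_mul_of_nonneg_left hle hk
      linarith
    · linarith

theorem abs_bound_B {α p c : ℝ} (h0 : 0 < α) (h1 : α < 1) (hp : 1 < p) {φ : ℝ → ℝ}
    (hnt : ∃ x, φ x ≠ 0) (hev : ∀ x, φ (-x) = φ x) (hm : MonotoneOn φ (Ioo (-π) 0))
    (hs : IsSteadySolution α c (nAbs p) φ) : 1 ≤ c + p * (-φ (-π)) ^ (p - 1) := by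
  have heq := eq_cos h0 h1 (nAbs_cont hp) hs
  obtain ⟨hc, hper, hmean, -⟩ := hs
  have hm' := mono_Icc hc hm
  have h2 := cheb_strict hc hper hev hm' hmean hnt
  obtain ⟨k1, k2, k3⟩ := min_neg hc hper hev hm' hmean hnt
  have hnc := (nAbs_cont hp)
  have h3 := cheb (g := fun x => p * (-φ (-π)) ^ (p - 1) * φ x + nAbs p (φ x)) (by fun_prop)
    (fun x => by simp only [hev])
    (fun a ha b hb hab => g_mono hp (by linarith : 0 ≤ -φ (-π)) (by simpa using (k3 a).1)
      (by simpa using (k3 b).1) (hm' ha hb hab))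
  simp only [add_mul] at h3
  rw [intervalIntegral.integral_add ((by fun_prop : Continuous _).intervalIntegrable _ _)
    ((by fun_prop : Continuous _).intervalIntegrable _ _)] at h3
  simp only [mul_assoc, intervalIntegral.integral_const_mul] at h3
  simp only [← mul_assoc] at h3
  by_contra hcon
  push Not at hcon
  nlinarith

theorem per_int_sub {f : ℝ → ℝ} (hf : Function.Periodic f (2 * π)) (x : ℝ) :
    ∫ z in (-π)..π, f (x - z) = ∫ z in (-π)..π, f z := by
  rw [intervalIntegral.integral_comp_sub_left f x]
  have e2 := hf.intervalIntegral_add_eq (x - π) (-π)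
  rwa [show x - π + 2 * π = x - -π by ring, show -π + 2 * π = π by ring] at e2

theorem conv_shift (α : ℝ) {φ : ℝ → ℝ} (hper : Function.Periodic φ (2 * π)) (x : ℝ) :
    ∫ y in (-π)..π, Kker α (x - y) * φ y = ∫ z in (-π)..π, Kker α z * φ (x - z) := by
  have hp : Function.Periodic (fun z => Kker α z * φ (x - z)) (2 * π) := by
    intro z
    show Kker α (z + 2 * π) * φ (x - (z + 2 * π)) = _
    rw [Kker_periodic α z, ← hper (x - (z + 2 * π))]
    congr 2; ring
  have := per_int_sub hp x
  simpa using this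

theorem rpow_split {α ρ : ℝ} (h0 : 0 < α) (h1 : α < 1) (hρ : 0 < ρ) (z : ℝ) :
    |z| ^ (α - 1) ≤ ρ ^ (α - 1) + ρ ^ (α / 2) * |z| ^ (α / 2 - 1) := by
  rcases eq_or_ne z 0 with rfl | hz
  · rw [abs_zero, Real.zero_rpow (by linarith)]; positivity
  have hz' : 0 < |z| := abs_pos.2 hz
  rcases le_total ρ |z| with h | h
  · have := Real.rpow_le_rpow_of_nonpos hρ h (by linarith : α - 1 ≤ 0)
    have h2 : 0 ≤ ρ ^ (α / 2) * |z| ^ (α / 2 - 1) := by positivity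
    linarith
  · have e : |z| ^ (α - 1) = |z| ^ (α / 2) * |z| ^ (α / 2 - 1) := by
      rw [← Real.rpow_add hz']; ring_nf
    rw [e]
    have := mul_le_mul_of_nonneg_right (Real.rpow_le_rpow hz'.le h (by linarith : 0 ≤ α / 2))
      (by positivity : 0 ≤ |z| ^ (α / 2 - 1))
    have h2 : 0 ≤ ρ ^ (α - 1) := by positivity
    linarith

theorem abs_small {α p : ℝ} (h0 : 0 < α) (h1 : α < 1) (hp : 1 < p) :
    ∃ δ0 > 0, ∀ (c : ℝ) (φ : ℝ → ℝ), 0 < c → 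
      (∃ x, φ x ≠ 0) → (∀ x, φ (-x) = φ x) → MonotoneOn φ (Set.Ioo (-π) 0) →
      IsSteadySolution α c (nAbs p) φ → (∀ x, nAbs' p (φ x) ≤ c) → c < δ0 →
      p * (-φ (-π)) ^ (p - 1) ≤ 1 / 2 := by
  have hpi := Real.pi_pos
  obtain ⟨C, hC, hK⟩ := Kker_bound h0 h1
  set ms : ℝ := (1 / (2 * p)) ^ (1 / (p - 1)) with hms
  have hp1 : 0 < p - 1 := by linarith
  have hms0 : 0 < ms := by positivity
  have hs : ms ^ (p - 1) = 1 / (2 * p) := by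
    rw [hms, ← Real.rpow_mul (by positivity), one_div_mul_cancel hp1.ne', Real.rpow_one]
  set s : ℝ := 1 / (2 * p) with hsdef
  have hs0 : 0 < s := by positivity
  set I : ℝ := ∫ z in (-π)..π, |z| ^ (α / 2 - 1) with hI
  have hI0 : 0 ≤ I := intervalIntegral.integral_nonneg (by linarith) fun x _ => by positivity
  set ρ : ℝ := (s / (4 * (C * I + 1))) ^ (2 / α) with hρ
  have hρ0 : 0 < ρ := by positivity
  have hρ1 : ρ ^ (α / 2) = s / (4 * (C * I + 1)) := by
    rw [hρ, ← Real.rpow_mul (by positivity), show 2 / α * (α / 2) = 1 by field_simp, Real.rpow_one]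
  have hρ2 : C * I * ρ ^ (α / 2) ≤ s / 4 := by
    rw [hρ1, mul_div_assoc', div_le_div_iff₀ (by positivity) (by norm_num)]
    have : 0 ≤ C * I := by positivity
    nlinarith
  set D : ℝ := C * ρ ^ (α - 1) * (4 * π) with hD
  have hD0 : 0 < D := by positivity
  set M0 : ℝ := min (ms / 8) (s * ms / (4 * D)) with hM0
  have hM00 : 0 < M0 := lt_min (by positivity) (by positivity)
  refine ⟨p * M0 ^ (p - 1), by positivity, ?_⟩
  intro c φ hc hnt hev hmon hsol hder hcd
  obtain ⟨hcont, hper, hmean, heq⟩ := hsol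
  have hm' := mono_Icc hcont hmon
  obtain ⟨k1, k2, k3⟩ := min_neg hcont hper hev hm' hmean hnt
  set m := -φ (-π) with hm
  set M := φ 0 with hM
  have hMM : M < M0 := by
    rcases k2.eq_or_lt with h | h
    · rw [← h]; exact hM00
    have h3 := hder 0
    unfold nAbs' at h3
    rw [← hM, abs_of_pos h] at h3
    have e : p * M * M ^ (p - 2) = p * M ^ (p - 1) := by
      rw [mul_assoc, mul_comm M, ← Real.rpow_add_one h.ne']; ring_nf
    rw [e] at h3
    have h4 : M ^ (p - 1) < M0 ^ (p - 1) := by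
      have := h3.trans_lt hcd
      exact lt_of_mul_lt_mul_left this (by linarith)
    exact (Real.rpow_lt_rpow_iff h.le hM00.le hp1).1 h4
  have hM1 : M < ms / 8 := hMM.trans_le (min_le_left _ _)
  have hM2 : M * (4 * D) ≤ s * ms := by
    have := hMM.le.trans (min_le_right _ _)
    rwa [le_div_iff₀ (by positivity)] at this
  have goal : m ≤ ms := by
    by_contra hcon
    push Not at hcon
    have hm0 : 0 < m := hms0.trans hcon
    have hab : ∀ x, |φ x| ≤ m := fun x => abs_le.2 ⟨by linarith [(k3 x).1], by linarith [(k3 x).2]⟩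
    have hab2 : ∀ x, |φ x| ≤ 2 * M - φ x := fun x => by
      rw [abs_le]; constructor <;> linarith [(k3 x).2]
    have hint : ∀ x, ∫ z in (-π)..π, (2 * M - φ (x - z)) = 4 * π * M := by
      intro x
      rw [intervalIntegral.integral_sub (by simp) ((by fun_prop : Continuous _).intervalIntegrable _ _),
        per_int_sub hper x, hmean]
      simp; ring
    -- convolution bound
    have hconv : |∫ y in (-π)..π, Kker α (-π - y) * φ y| ≤
        C * (ρ ^ (α - 1) * (4 * π * M) + m * ρ ^ (α / 2) * I) := by
      rw [conv_shift α hper]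
      have hI1 : IntervalIntegrable (fun z => C * (ρ ^ (α - 1) * (2 * M - φ (-π - z)))) volume (-π) π :=
        (by fun_prop : Continuous _).intervalIntegrable _ _
      have hI2 : IntervalIntegrable (fun z : ℝ => C * (m * ρ ^ (α / 2)) * |z| ^ (α / 2 - 1)) volume (-π) π :=
        (abs_rpow_intervalIntegrable (by linarith) _ _).const_mul _
      have hle : -π ≤ π := by linarith
      have := intervalIntegral.norm_integral_le_of_norm_le hle
        (f := fun z => Kker α z * φ (-π - z))
        (g := fun z => C * (ρ ^ (α - 1) * (2 * M - φ (-π - z))) + C * (m * ρ ^ (α / 2)) * |z| ^ (α / 2 - 1))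
        (μ := volume) (Eventually.of_forall fun z hz => ?_) (hI1.add hI2)
      · refine this.trans (le_of_eq ?_)
        rw [intervalIntegral.integral_add hI1 hI2]
        rw [intervalIntegral.integral_const_mul, intervalIntegral.integral_const_mul, 
          intervalIntegral.integral_const_mul, hint]
        ring
      · have hKz := hK z (abs_le.2 ⟨hz.1.le, hz.2⟩)
        rw [Real.norm_eq_abs, abs_mul]
        have h2 := rpow_split h0 h1 hρ0 z
        have a1 : |Kker α z| * |φ (-π - z)| ≤
            C * (ρ ^ (α - 1) + ρ ^ (α / 2) * |z| ^ (α / 2 - 1)) * |φ (-π - z)| := by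
          apply mul_le_mul_of_nonneg_right _ (abs_nonneg _)
          exact hKz.trans (mul_le_mul_of_nonneg_left h2 hC.le)
        have a2 : C * ρ ^ (α - 1) * |φ (-π - z)| ≤ C * ρ ^ (α - 1) * (2 * M - φ (-π - z)) :=
          mul_le_mul_of_nonneg_left (hab2 _) (by positivity)
        have a3 : C * ρ ^ (α / 2) * |z| ^ (α / 2 - 1) * |φ (-π - z)| ≤
          C * ρ ^ (α / 2) * |z| ^ (α / 2 - 1) * m :=
          mul_le_mul_of_nonneg_left (hab _) (by positivity)
        linarith
    have hmp : m ^ p = m ^ (p - 1) * m := by rw [← Real.rpow_add_one hm0.ne']; ring_nf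
    have hmeanp : (1 / (2 * π)) * ∫ y in (-π)..π, nAbs p (φ y) ≤ 2 * m ^ (p - 1) * M := by
      have : ∫ y in (-π)..π, nAbs p (φ y) ≤ ∫ y in (-π)..π, m ^ (p - 1) * (2 * M - φ y) := by
        have hn := nAbs_cont hp
        refine intervalIntegral.integral_mono_on (by linarith)
          ((hn.comp hcont).intervalIntegrable _ _)
          ((by fun_prop : Continuous _).intervalIntegrable _ _) fun y _ => ?_
        unfold nAbs
        have : |φ y| ^ p = |φ y| ^ (p - 1) * |φ y| := by
          rcases (abs_nonneg (φ y)).eq_or_lt with h | h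
          · rw [← h, Real.zero_rpow (by linarith)]; simp
          · rw [← Real.rpow_add_one h.ne']; ring_nf
        rw [this]
        exact mul_le_mul (Real.rpow_le_rpow (abs_nonneg _) (hab y) hp1.le) (hab2 y) (abs_nonneg _)
          (by positivity)
      rw [intervalIntegral.integral_const_mul] at this
      have h5 : ∫ y in (-π)..π, (2 * M - φ y) = 4 * π * M := by
        rw [intervalIntegral.integral_sub (by simp) (hcont.intervalIntegrable _ _), hmean]
        simp; ring
      rw [h5] at this
      rw [one_div_mul_eq_div, div_le_iff₀ (by positivity)]
      linarith
    have he := heq (-π)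
    have e1 : φ (-π) = -m := by rw [hm]; ring
    have e2 : nAbs p (φ (-π)) = m ^ p := by
      unfold nAbs; rw [e1, abs_neg, abs_of_pos hm0]
    rw [e2, e1] at he
    have hlow := (abs_le.1 hconv).1
    rw [he] at hlow
    have hsm : s ≤ m ^ (p - 1) := by
      rw [← hs]; exact Real.rpow_le_rpow hms0.le hcon.le hp1.le
    have b1 : C * (m * ρ ^ (α / 2) * I) ≤ m ^ p / 4 := by
      have : C * I * ρ ^ (α / 2) * m ≤ s / 4 * m := mul_le_mul_of_nonneg_right hρ2 hm0.le
      have h2 : s * m ≤ m ^ (p - 1) * m := mul_le_mul_of_nonneg_right hsm hm0.le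
      rw [hmp]; linarith
    have b2 : 2 * m ^ (p - 1) * M ≤ m ^ p / 4 := by
      rw [hmp]
      have : m ^ (p - 1) * M ≤ m ^ (p - 1) * (m / 8) :=
        mul_le_mul_of_nonneg_left (by linarith) (by positivity)
      linarith
    have b3 : C * (ρ ^ (α - 1) * (4 * π * M)) ≤ m ^ p / 4 := by
      have h6 : s * ms ≤ m ^ (p - 1) * m := mul_le_mul hsm hcon.le hms0.le (by positivity)
      rw [hmp]
      have : C * (ρ ^ (α - 1) * (4 * π * M)) = M * D := by rw [hD]; ring
      rw [this]; linarith
    have b4 : 0 < m ^ p := by positivity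
    have b5 : 0 < c * m := by positivity
    linarith
  have : m ^ (p - 1) ≤ s := by
    rw [← hs]; exact Real.rpow_le_rpow (by linarith) goal hp1.le
  have h7 : p * s = 1 / 2 := by rw [hsdef]; field_simp
  rw [← h7]
  exact mul_le_mul_of_nonneg_left this (by linarith)

theorem lower_bound {α p : ℝ} (h0 : 0 < α) (h1 : α < 1) (hp : 1 < p) :
    ∃ δ > 0, δ ≤ 1 ∧ ∀ (c : ℝ) (φ : ℝ → ℝ), 0 < c → 
      (∃ x, φ x ≠ 0) → (∀ x, φ (-x) = φ x) → MonotoneOn φ (Set.Ioo (-π) 0) →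
      IsSteadySolution α c (nAbs p) φ → (∀ x, nAbs' p (φ x) ≤ c) → δ ≤ c := by
  obtain ⟨δ0, hδ, h⟩ := abs_small h0 h1 hp
  refine ⟨min δ0 (1/2), by positivity, (min_le_right _ _).trans (by norm_num), ?_⟩
  intro c φ hc hnt hev hmon hsol hder
  rcases lt_or_ge c δ0 with hlt | hge
  · have a := h c φ hc hnt hev hmon hsol hder hlt
    have b := abs_bound_B h0 h1 hp hnt hev hmon hsol
    exact (min_le_right _ _).trans (by linarith)
  · exact (min_le_left _ _).trans hge

/-- The superposition map along a line in `C(X, ℝ)`. -/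
noncomputable def nem {X : Type*} [TopologicalSpace X] (s : C(ℝ, ℝ)) (a b : C(X, ℝ)) (h : ℝ) :
    C(X, ℝ) := ⟨fun x => s (a x + h * b x), by fun_prop⟩

theorem nem_continuous {X : Type*} [TopologicalSpace X] (s : C(ℝ, ℝ)) (a b : C(X, ℝ)) :
    Continuous (nem s a b) := by
  let g : C(ℝ × X, ℝ) := ⟨fun q => s (a q.2 + q.1 * b q.2), by fun_prop⟩
  exact g.curry.continuous

theorem nem_hasDerivAt {X : Type*} [TopologicalSpace X] [CompactSpace X] (s s' : C(ℝ, ℝ))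
    (hs : ∀ t, HasDerivAt s (s' t) t) (a b : C(X, ℝ)) (h : ℝ) :
    HasDerivAt (nem s a b) (b * nem s' a b h) h := by
  have hc : Continuous (fun h => b * nem s' a b h) := continuous_const.mul (nem_continuous s' a b)
  have e : nem s a b = fun h => nem s a b 0 + ∫ t in (0:ℝ)..h, b * nem s' a b t := by
    funext h
    ext x
    have h1 : (∫ t in (0:ℝ)..h, b * nem s' a b t) x = ∫ t in (0:ℝ)..h, (b * nem s' a b t) x :=
      ((ContinuousMap.evalCLM ℝ x).intervalIntegral_comp_comm (hc.intervalIntegrable _ _)).symm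
    rw [ContinuousMap.add_apply, h1]
    have h2 : ∫ t in (0:ℝ)..h, (b * nem s' a b t) x = s (a x + h * b x) - s (a x + 0 * b x) := by
      refine intervalIntegral.integral_eq_sub_of_hasDerivAt (f := fun t => s (a x + t * b x)) ?_ ?_
      · intro t _
        have := (hs (a x + t * b x)).comp t (((hasDerivAt_id t).mul_const (b x)).const_add (a x))
        convert! this using 1
        simp [nem, mul_comm]
      · apply Continuous.intervalIntegrable
        simp only [nem, ContinuousMap.mul_apply, ContinuousMap.coe_mk]
        fun_prop
    rw [h2]
    simp [nem]
  rw [e]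
  exact (intervalIntegral.integral_hasDerivAt_right (hc.intervalIntegrable _ _)
    (hc.stronglyMeasurableAtFilter _ _) hc.continuousAt).const_add _

theorem nem_contDiff {X : Type*} [TopologicalSpace X] [CompactSpace X] (a b : C(X, ℝ)) (n : ℕ) :
    ∀ (s : C(ℝ, ℝ)), ContDiff ℝ (⊤ : ℕ∞) s → ContDiff ℝ n (nem s a b) := by
  induction n with
  | zero => intro s _; exact contDiff_zero.2 (nem_continuous s a b)
  | succ n ih =>
    intro s hs
    have hd : ContDiff ℝ (⊤ : ℕ∞) (deriv s) := (contDiff_infty_iff_deriv.1 hs).2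
    let s' : C(ℝ, ℝ) := ⟨deriv s, hd.continuous⟩
    have hder := nem_hasDerivAt s s'
      (fun t => ((contDiff_infty_iff_deriv.1 hs).1 t).hasDerivAt) a b
    have : ((n + 1 : ℕ) : WithTop ℕ∞) = (n : WithTop ℕ∞) + 1 := by push_cast; rfl
    rw [this, contDiff_succ_iff_deriv]
    refine ⟨fun h => (hder h).differentiableAt, by simp, ?_⟩
    rw [show deriv (nem s a b) = fun h => b * nem s' a b h from funext fun h => (hder h).deriv]
    exact contDiff_const.mul (ih s' hd)

theorem nem_smooth {X : Type*} [TopologicalSpace X] [CompactSpace X] (a b : C(X, ℝ))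
    (s : C(ℝ, ℝ)) (hs : ContDiff ℝ (⊤ : ℕ∞) s) : ContDiff ℝ (⊤ : ℕ∞) (nem s a b) :=
  contDiff_infty.2 fun n => nem_contDiff a b n s hs

theorem expC_apply {X : Type*} [TopologicalSpace X] [CompactSpace X] (v : C(X, ℝ)) (x : X) :
    (NormedSpace.exp v) x = Real.exp (v x) := by
  have := NormedSpace.map_exp (ContinuousMap.evalAlgHom ℝ ℝ x) (continuous_eval_const x) v
  rw [Real.exp_eq_exp_ℝ]
  exact this

theorem expC_contDiff {X : Type*} [TopologicalSpace X] [CompactSpace X] :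
    ContDiff ℝ (⊤ : ℕ∞) (NormedSpace.exp : C(X, ℝ) → C(X, ℝ)) :=
  contDiff_iff_contDiffAt.2 fun x => (NormedSpace.exp_analytic (𝕂 := ℝ) x).contDiffAt

theorem cutoff_ext {s : ℝ → ℝ} {c r R : ℝ} (hr : 0 < r) (hrR : r < R)
    (hs : ContDiffOn ℝ (⊤ : ℕ∞) s (Ioo (c - R) (c + R))) :
    ∃ g : C(ℝ, ℝ), ContDiff ℝ (⊤ : ℕ∞) g ∧ ∀ x, |x - c| ≤ r → g x = s x := by
  let f : ContDiffBump c := ⟨r, (r + R) / 2, hr, by linarith⟩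
  have hcd : ContDiff ℝ (⊤ : ℕ∞) (fun x => f x * s x) := by
    rw [contDiff_iff_contDiffAt]
    intro x
    by_cases hx : x ∈ Ioo (c - R) (c + R)
    · exact f.contDiff.contDiffAt.mul (hs.contDiffAt (isOpen_Ioo.mem_nhds hx))
    · have hx2 : x ∉ Metric.closedBall c ((r + R) / 2) := by
        rw [Real.closedBall_eq_Icc]
        intro h; exact hx ⟨by linarith [h.1], by linarith [h.2]⟩
      have : (fun x => f x * s x) =ᶠ[𝓝 x] fun _ => 0 := by
        filter_upwards [Metric.isClosed_closedBall.isOpen_compl.mem_nhds hx2] with y hy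
        have : f y = 0 := f.zero_of_le_dist (by
          simp only [mem_compl_iff, Metric.mem_closedBall, not_le] at hy
          exact hy.le)
        rw [this, zero_mul]
      exact contDiffAt_const.congr_of_eventuallyEq this
  refine ⟨⟨_, hcd.continuous⟩, hcd, fun x hx => ?_⟩
  have : f x = 1 := f.one_of_mem_closedBall (by simpa [Real.dist_eq] using hx)
  simp [this]

/-- The nonlinear functional whose zero set describes transported solutions. -/
noncomputable def Ffun {X Y : Type*} [TopologicalSpace X] [CompactSpace X] [TopologicalSpace Y]
    [CompactSpace Y] (c p : ℝ) (μ : C(X, ℝ)) (f : ℝ → C(Y, ℝ)) (Q : C(Y, ℝ) →L[ℝ] C(X, ℝ))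
    (E0 : C(X, ℝ) →L[ℝ] C(Y, ℝ)) (e1 : C(Y, ℝ)) (q : ℝ × C(X, ℝ)) : C(X, ℝ) :=
  -(c • NormedSpace.exp q.2) - NormedSpace.exp (p • q.2) + μ
    - Q (f q.1 * (E0 (-NormedSpace.exp q.2) + e1))

theorem Ffun_contDiff {X Y : Type*} [TopologicalSpace X] [CompactSpace X] [TopologicalSpace Y]
    [CompactSpace Y] (c p : ℝ) (μ : C(X, ℝ)) (f : ℝ → C(Y, ℝ)) (Q : C(Y, ℝ) →L[ℝ] C(X, ℝ))
    (E0 : C(X, ℝ) →L[ℝ] C(Y, ℝ)) (e1 : C(Y, ℝ)) (hf : ContDiff ℝ (⊤ : ℕ∞) f) :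
    ContDiff ℝ (⊤ : ℕ∞) (Ffun c p μ f Q E0 e1) := by
  have h1 : ContDiff ℝ (⊤ : ℕ∞) (fun q : ℝ × C(X, ℝ) => NormedSpace.exp q.2) :=
    expC_contDiff.comp contDiff_snd
  have h2 : ContDiff ℝ (⊤ : ℕ∞) (fun q : ℝ × C(X, ℝ) => NormedSpace.exp (p • q.2)) :=
    expC_contDiff.comp (contDiff_snd.const_smul p)
  have h3 : ContDiff ℝ (⊤ : ℕ∞) (fun q : ℝ × C(X, ℝ) => f q.1) := hf.comp contDiff_fst
  have h4 : ContDiff ℝ (⊤ : ℕ∞) (fun q : ℝ × C(X, ℝ) => E0 (-NormedSpace.exp q.2) + e1) :=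
    (E0.contDiff.comp h1.neg).add contDiff_const
  exact (((h1.const_smul c).neg.sub h2).add contDiff_const).sub (Q.contDiff.comp (h3.mul h4))

theorem ift_main {X Y : Type*} [TopologicalSpace X] [CompactSpace X] [TopologicalSpace Y]
    [CompactSpace Y] (c p : ℝ) (hc : 0 < c) (hp : 1 < p)
    (μ : C(X, ℝ)) (f : ℝ → C(Y, ℝ)) (Q : C(Y, ℝ) →L[ℝ] C(X, ℝ))
    (E0 : C(X, ℝ) →L[ℝ] C(Y, ℝ)) (e1 : C(Y, ℝ)) (hf : ContDiff ℝ (⊤ : ℕ∞) f)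
    (hT : ∀ w, ‖Q (f 0 * E0 w)‖ ≤ c / 2 * ‖w‖) (v : ℝ → C(X, ℝ)) (hv : ContinuousAt v 0)
    (h0 : ∀ᶠ h in 𝓝 (0:ℝ), Ffun c p μ f Q E0 e1 (h, v h) = 0) : ContDiffAt ℝ (⊤ : ℕ∞) v 0 := by
  set F := Ffun c p μ f Q E0 e1 with hF
  have hcd : ContDiffAt ℝ (⊤ : ℕ∞) F (0, v 0) := (Ffun_contDiff c p μ f Q E0 e1 hf).contDiffAt
  set v0 := v 0 with hv0
  let L : C(X, ℝ) → C(X, ℝ) →L[ℝ] C(X, ℝ) := fun a => ContinuousLinearMap.mul ℝ C(X, ℝ) a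
  set T : C(X, ℝ) →L[ℝ] C(X, ℝ) := Q ∘L (ContinuousLinearMap.mul ℝ C(Y, ℝ) (f 0)) ∘L E0 with hTdef
  have hTn : ‖T‖ ≤ c / 2 := T.opNorm_le_bound (by positivity) hT
  let b : C(X, ℝ) := ⟨fun x => c + p * Real.exp ((p - 1) * v0 x), by fun_prop⟩
  have hb : ∀ x, c ≤ b x := fun x => by
    have : 0 < p * Real.exp ((p - 1) * v0 x) := by positivity
    show c ≤ c + p * Real.exp ((p - 1) * v0 x)
    linarith
  let bi : C(X, ℝ) := ⟨fun x => (b x)⁻¹, b.continuous.inv₀ fun x => (hc.trans_le (hb x)).ne'⟩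
  have hbbi : b * bi = 1 := by
    ext x; exact mul_inv_cancel₀ (hc.trans_le (hb x)).ne'
  have hbi : ‖bi‖ ≤ c⁻¹ := by
    rw [ContinuousMap.norm_le _ (by positivity)]
    intro x
    show ‖(b x)⁻¹‖ ≤ c⁻¹
    rw [Real.norm_eq_abs, abs_of_nonneg (inv_nonneg.2 (hc.le.trans (hb x)))]
    exact inv_anti₀ hc (hb x)
  have hS : ‖L bi ∘L T‖ < 1 := by
    have h1 := ContinuousLinearMap.opNorm_comp_le (L bi) T
    have h2 : ‖L bi‖ ≤ c⁻¹ := (ContinuousLinearMap.opNorm_mul_apply_le ℝ C(X, ℝ) bi).trans hbi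
    have h3 : ‖L bi‖ * ‖T‖ ≤ c⁻¹ * (c / 2) := mul_le_mul h2 hTn T.opNorm_nonneg (by positivity)
    have h4 : c⁻¹ * (c / 2) = 1 / 2 := by field_simp
    linarith
  obtain ⟨u, hu⟩ := isUnit_one_sub_of_norm_lt_one (x := (L bi ∘L T : C(X, ℝ) →L[ℝ] C(X, ℝ))) hS
  have inv1 : (1 - L bi ∘L T : C(X, ℝ) →L[ℝ] C(X, ℝ)).IsInvertible := by
    rw [← hu]
    exact ContinuousLinearMap.IsInvertible.of_inverse (g := ((u⁻¹ : (C(X, ℝ) →L[ℝ] C(X, ℝ))ˣ) : _))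
      u.mul_inv u.inv_mul
  have invL : ∀ a a' : C(X, ℝ), a * a' = 1 → (L a).IsInvertible := by
    intro a a' h
    refine ContinuousLinearMap.IsInvertible.of_inverse (g := L a') ?_ ?_
    · ext w : 1
      show a * (a' * w) = w
      rw [← mul_assoc, h, one_mul]
    · ext w : 1
      show a' * (a * w) = w
      rw [← mul_assoc, mul_comm a', h, one_mul]
  let e0 : C(X, ℝ) := NormedSpace.exp v0
  have he0 : e0 * NormedSpace.exp (-v0) = 1 := by
    ext x
    show (NormedSpace.exp v0) x * (NormedSpace.exp (-v0)) x = 1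
    rw [expC_apply, expC_apply, ← Real.exp_add]; simp
  have hDer : HasFDerivAt (fun v => F (0, v))
      (L (-b) ∘L (1 - L bi ∘L T) ∘L L e0) v0 := by
    have d1 : HasFDerivAt (fun v : C(X, ℝ) => NormedSpace.exp v) (e0 • (1 : C(X, ℝ) →L[ℝ] C(X, ℝ))) v0 :=
      hasFDerivAt_exp
    have d2 : HasFDerivAt (fun v : C(X, ℝ) => NormedSpace.exp (p • v))
        ((NormedSpace.exp (p • v0) • (1 : C(X, ℝ) →L[ℝ] C(X, ℝ))) ∘L
          (p • (1 : C(X, ℝ) →L[ℝ] C(X, ℝ)))) v0 := by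
      have i1 : HasFDerivAt (fun v : C(X, ℝ) => p • v) (p • (1 : C(X, ℝ) →L[ℝ] C(X, ℝ))) v0 :=
        (hasFDerivAt_id v0).const_smul p
      exact (hasFDerivAt_exp (x := p • v0)).comp v0 i1
    have d3 := (Q ∘L (ContinuousLinearMap.mul ℝ C(Y, ℝ) (f 0))).hasFDerivAt.comp v0
      ((E0.hasFDerivAt.comp v0 d1.neg).add_const e1)
    have d4 := (((d1.const_smul c).neg.sub d2).add_const μ).sub d3
    refine d4.congr_fderiv ?_
    ext w : 1
    have hw : ∀ x, (Q (f 0 * E0 (-(e0 * w)))) x = - (Q (f 0 * E0 (e0 * w))) x := by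
      intro x; simp
    ext x
    have k1 : (b x) * ((b x)⁻¹ * (Q (f 0 * E0 (e0 * w))) x) = (Q (f 0 * E0 (e0 * w))) x :=
      mul_inv_cancel_left₀ (hc.trans_le (hb x)).ne' _
    have k2 : Real.exp (p * v0 x) = Real.exp ((p - 1) * v0 x) * Real.exp (v0 x) := by
      rw [← Real.exp_add]; ring_nf
    show -(c * (e0 x * w x)) - (NormedSpace.exp (p • v0)) x * (p * w x) - (Q (f 0 * E0 (-(e0 * w)))) x
      = - b x * (e0 x * w x - (b x)⁻¹ * (Q (f 0 * E0 (e0 * w))) x)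
    rw [hw]
    have k3 : e0 x = Real.exp (v0 x) := expC_apply _ _
    have k4 : (NormedSpace.exp (p • v0)) x = Real.exp (p * v0 x) := expC_apply _ _
    have k5 : b x = c + p * Real.exp ((p - 1) * v0 x) := rfl
    rw [mul_sub, neg_mul (b x) ((b x)⁻¹ * _), k1, k4, k2, k3, k5]
    ring
  have hinv : (fderiv ℝ F (0, v0) ∘L .inr ℝ ℝ C(X, ℝ)).IsInvertible := by
    have i1 : HasFDerivAt (fun v : C(X, ℝ) => ((0:ℝ), v)) (ContinuousLinearMap.inr ℝ ℝ C(X, ℝ)) v0 :=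
      hasFDerivAt_prodMk_right 0 v0
    have i2 := ((hcd.differentiableAt (by simp)).hasFDerivAt).comp v0 i1
    rw [i2.unique hDer]
    refine (invL (-b) (-bi) (by rw [neg_mul_neg, hbbi])).comp (inv1.comp (invL _ _ he0))
  have hF0 : F (0, v0) = 0 := h0.self_of_nhds
  have key := hcd.eventually_apply_eq_iff_implicitFunction (by simp) hinv
  have hsm := hcd.contDiffAt_implicitFunction (by simp) hinv
  refine hsm.congr_of_eventuallyEq ?_
  have ht : Tendsto (fun h => (h, v h)) (𝓝 (0:ℝ)) (𝓝 ((0:ℝ), v0)) :=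
    tendsto_id.prodMk_nhds hv
  filter_upwards [ht.eventually key, h0] with h h1 h2
  exact (h1.1 (h2.trans hF0.symm)).symm

theorem negpi_le : -π ≤ π := by linarith [Real.pi_pos]

theorem exists_Qop {X : Type*} [TopologicalSpace X] [CompactSpace X] [FirstCountableTopology X]
    {w : ℝ → ℝ} (hw : IntervalIntegrable w volume (-π) π) :
    ∃ Q : C(X × Icc (-π) π, ℝ) →L[ℝ] C(X, ℝ), ∀ f x,
      Q f x = ∫ z in (-π)..π, w z * f (x, projIcc (-π) π negpi_le z) := by
  have hmeas : ∀ (f : C(X × Icc (-π) π, ℝ)) (x : X), Continuous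
      (fun z => f (x, projIcc (-π) π negpi_le z)) := fun f x =>
    f.continuous.comp (continuous_const.prodMk continuous_projIcc)
  have hint : ∀ (f : C(X × Icc (-π) π, ℝ)) (x : X), IntervalIntegrable
      (fun z => w z * f (x, projIcc (-π) π negpi_le z)) volume (-π) π := fun f x =>
    hw.mul_continuousOn (hmeas f x).continuousOn
  have hcont : ∀ f : C(X × Icc (-π) π, ℝ), Continuous
      (fun x => ∫ z in (-π)..π, w z * f (x, projIcc (-π) π negpi_le z)) := by
    intro f
    refine intervalIntegral.continuous_of_dominated_interval (bound := fun z => |w z| * ‖f‖)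
      (fun x => (hint f x).def'.aestronglyMeasurable) (fun x => ?_) (hw.abs.mul_const _) ?_
    · refine Eventually.of_forall fun z _ => ?_
      rw [norm_mul, Real.norm_eq_abs]
      exact mul_le_mul_of_nonneg_left (f.norm_coe_le_norm _) (abs_nonneg _)
    · refine Eventually.of_forall fun z _ => ?_
      exact continuous_const.mul (f.continuous.comp (continuous_id.prodMk continuous_const))
  let Ql : C(X × Icc (-π) π, ℝ) →ₗ[ℝ] C(X, ℝ) :=
    { toFun := fun f => ⟨_, hcont f⟩
      map_add' := fun f g => by
        ext x
        show ∫ z in (-π)..π, w z * (f + g) (x, projIcc (-π) π negpi_le z) =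
          (∫ z in (-π)..π, w z * f (x, projIcc (-π) π negpi_le z)) + ∫ z in (-π)..π, w z * g (x, projIcc (-π) π negpi_le z)
        rw [← intervalIntegral.integral_add (hint f x) (hint g x)]
        simp only [ContinuousMap.add_apply, mul_add]
      map_smul' := fun r f => by
        ext x
        show ∫ z in (-π)..π, w z * (r • f) (x, projIcc (-π) π negpi_le z) =
          r * ∫ z in (-π)..π, w z * f (x, projIcc (-π) π negpi_le z)
        rw [← intervalIntegral.integral_const_mul]
        congr 1; funext z
        simp only [ContinuousMap.smul_apply, smul_eq_mul]; ring }
  refine ⟨Ql.mkContinuous (∫ z in (-π)..π, |w z|) fun f => ?_, fun f x => rfl⟩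
  have h0 : 0 ≤ ∫ z in (-π)..π, |w z| :=
    intervalIntegral.integral_nonneg negpi_le fun _ _ => abs_nonneg _
  rw [ContinuousMap.norm_le _ (by positivity)]
  intro x
  rw [← intervalIntegral.integral_mul_const]
  refine intervalIntegral.norm_integral_le_of_norm_le negpi_le (Eventually.of_forall fun z _ => ?_)
    (hw.abs.mul_const _)
  rw [norm_mul, Real.norm_eq_abs]
  exact mul_le_mul_of_nonneg_left (f.norm_coe_le_norm _) (abs_nonneg _)

/-- Averaged derivative. -/
noncomputable def kap (η : ℝ → ℝ) (x z : ℝ) : ℝ := ∫ s in (0:ℝ)..1, deriv η (x - z + s * z)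

theorem kap_cont {η : ℝ → ℝ} (hη : ContDiff ℝ (⊤ : ℕ∞) η) :
    Continuous (fun q : ℝ × ℝ => kap η q.1 q.2) := by
  have hd : Continuous (deriv η) := (contDiff_infty_iff_deriv.1 hη).2.continuous
  unfold kap
  apply intervalIntegral.continuous_parametric_intervalIntegral_of_continuous'
  fun_prop

theorem kap_mul {η : ℝ → ℝ} (hη : ContDiff ℝ (⊤ : ℕ∞) η) (x z : ℝ) :
    η x - η (x - z) = kap η x z * z := by
  have hd : Continuous (deriv η) := (contDiff_infty_iff_deriv.1 hη).2.continuous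
  unfold kap
  rw [← intervalIntegral.integral_mul_const]
  rw [intervalIntegral.integral_eq_sub_of_hasDerivAt (f := fun s => η (x - z + s * z))]
  · simp
  · intro s _
    have h1 : HasDerivAt η (deriv η (x - z + s * z)) (x - z + s * z) :=
      ((contDiff_infty_iff_deriv.1 hη).1 _).hasDerivAt
    have h2 : HasDerivAt (fun s : ℝ => x - z + s * z) z s := by
      simpa using! ((hasDerivAt_id s).mul_const z).const_add (x - z)
    exact h1.comp s h2
  · exact (by fun_prop : Continuous _).intervalIntegrable _ _

theorem kap_bound {η : ℝ → ℝ} {B : ℝ} (hB : ∀ x, |deriv η x| ≤ B) (x z : ℝ) :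
    |kap η x z| ≤ B := by
  unfold kap
  have := intervalIntegral.norm_integral_le_of_norm_le_const (a := (0:ℝ)) (b := 1)
    (f := fun s => deriv η (x - z + s * z)) (C := B) (fun s _ => hB _)
  simpa using this

theorem change_var (α : ℝ) {φ η : ℝ → ℝ} (hper : Function.Periodic φ (2 * π))
    (hη : ContDiff ℝ (⊤ : ℕ∞) η) {h x B : ℝ} (hB : ∀ x, |deriv η x| ≤ B) (hh : |h| * B ≤ 1 / 2)
    (h1 : η (x - π) = 0) (h2 : η (x + π) = 0) :
    ∫ y in (-π)..π, Kker α (x + h * η x - y) * φ y =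
      ∫ z in (-π)..π, Kker α (z + h * (kap η x z * z)) * φ (x - z + h * η (x - z)) *
        (1 + h * deriv η (x - z)) := by
  have hpi := Real.pi_pos
  have hp : Function.Periodic (fun y => Kker α (x + h * η x - y) * φ y) (2 * π) := by
    intro y
    show Kker α (x + h * η x - (y + 2 * π)) * φ (y + 2 * π) = _
    rw [hper y, ← Kker_periodic α (x + h * η x - (y + 2 * π))]
    congr 2; ring
  have e2 := hp.intervalIntegral_add_eq (-π) (x - π)
  rw [show x - π + 2 * π = x + π by ring, show -π + 2 * π = π by ring] at e2
  rw [e2]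
  have e3 := intervalIntegral.integral_comp_mul_deriv_of_deriv_nonneg (a := x - π) (b := x + π)
    (f := fun y => y + h * η y) (f' := fun y => 1 + h * deriv η y)
    (g := fun y => Kker α (x + h * η x - y) * φ y)
    (by have := hη.continuous; fun_prop)
    (fun y _ => (hasDerivAt_id y).add
      ((((contDiff_infty_iff_deriv.1 hη).1 y).hasDerivAt).const_mul h))
    (fun y _ => by
      have : |h * deriv η y| ≤ 1 / 2 := by
        rw [abs_mul]
        exact (mul_le_mul_of_nonneg_left (hB y) (abs_nonneg h)).trans hh
      linarith [(abs_le.1 this).1])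
  rw [h1, h2, mul_zero, add_zero, add_zero] at e3
  rw [← e3]
  have e4 := intervalIntegral.integral_comp_sub_left (a := -π) (b := π)
    (fun y => ((fun y => Kker α (x + h * η x - y) * φ y) ∘ fun y => y + h * η y) y *
      (1 + h * deriv η y)) x
  rw [show x - -π = x + π by ring] at e4
  rw [← e4]
  congr 1; funext z
  simp only [Function.comp]
  rw [← kap_mul hη x z]
  congr 3; ring

theorem kern_factor {α : ℝ} (h0 : 0 < α) (h1 : α < 1) {sP sS : C(ℝ, ℝ)}
    (hP : ∀ x, |x - 1| ≤ 1 / 2 → sP x = x ^ (α - 1)) (hS : ∀ x, |x - 0| ≤ 5 → sS x = Sreg α x)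
    {z t : ℝ} (hz0 : z ≠ 0) (hz : |z| ≤ π) (ht : |t| ≤ 1 / 2) :
    Kker α (z + t * z) = |z| ^ (α - 1) * ((1 / (π * Real.Gamma α)) *
      (Asing α * sP (1 + t) + |z| ^ (1 - α) * sS (z + t * z))) := by
  have hzp : 0 < |z| := abs_pos.2 hz0
  have ht' := abs_le.1 ht
  have hpos : 0 < 1 + t := by linarith
  have e : z + t * z = z * (1 + t) := by ring
  have habs : |z + t * z| = |z| * (1 + t) := by rw [e, abs_mul, abs_of_pos hpos]
  have hle : |z + t * z| ≤ 5 := by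
    rw [habs]
    have := Real.pi_lt_d2
    nlinarith
  have hne : z + t * z ≠ 0 := by rw [e]; exact mul_ne_zero hz0 hpos.ne'
  rw [Kker_decomp h0 h1 hne (by linarith), hP _ (by simpa using ht), hS _ (by simpa using hle), habs,
    Real.mul_rpow hzp.le hpos.le]
  have h3 : |z| ^ (α - 1) * |z| ^ (1 - α) = 1 := by
    rw [← Real.rpow_add hzp]; simp
  linear_combination (-(1 / (π * Real.Gamma α)) * Sreg α (z + t * z)) * h3

theorem small_eps {α C I c : ℝ} (h0 : 0 < α) (hc : 0 < c) {φ : ℝ → ℝ}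
    (hφ : Continuous φ) {x0 : ℝ} (hx0 : φ x0 < 0) :
    ∃ ε > 0, ε ≤ 1 / 2 ∧ C * (2 * ε) ^ (α / 2) * I ≤ c / 2 ∧
      ∀ y, |y - x0| ≤ 2 * ε → φ y ≤ φ x0 / 2 := by
  have t1 : Tendsto (fun ε : ℝ => C * (2 * ε) ^ (α / 2) * I) (𝓝 0) (𝓝 0) := by
    have : ContinuousAt (fun ε : ℝ => C * (2 * ε) ^ (α / 2) * I) 0 := by
      refine ContinuousAt.mul (ContinuousAt.mul continuousAt_const ?_) continuousAt_const
      exact ContinuousAt.rpow_const (by fun_prop) (Or.inr (by linarith))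
    have h2 := this.tendsto
    simpa [Real.zero_rpow (by linarith : α / 2 ≠ 0)] using h2
  have e1 : ∀ᶠ ε in 𝓝[>] (0:ℝ), C * (2 * ε) ^ (α / 2) * I < c / 2 :=
    (t1.mono_left nhdsWithin_le_nhds).eventually (gt_mem_nhds (by linarith))
  have e2 : ∀ᶠ y in 𝓝 x0, φ y < φ x0 / 2 := hφ.continuousAt.eventually (gt_mem_nhds (by linarith))
  obtain ⟨δ, hδ, hδ2⟩ := Metric.eventually_nhds_iff.1 e2
  have e3 : ∀ᶠ ε in 𝓝[>] (0:ℝ), ε < min (1/2) (δ / 2) :=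
    nhdsWithin_le_nhds (gt_mem_nhds (by positivity))
  obtain ⟨ε, ⟨a1, a2⟩, a3⟩ := ((e1.and e3).and self_mem_nhdsWithin).exists
  have a4 := a2.trans_le (min_le_left _ _)
  have a5 := a2.trans_le (min_le_right _ _)
  refine ⟨ε, a3, a4.le, a1.le, fun y hy => (hδ2 ?_).le⟩
  rw [Real.dist_eq]; linarith

theorem smooth_at {α p c : ℝ} (h0 : 0 < α) (h1 : α < 1) (hp : 1 < p) (hc : 0 < c) {φ : ℝ → ℝ}
    (hsol : IsSteadySolution α c (nAbs p) φ) {x0 : ℝ} (hx0 : φ x0 < 0) :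
    ContDiffAt ℝ (⊤ : ℕ∞) φ x0 := by
  have hpi := Real.pi_pos
  have hpi3 := Real.pi_gt_three
  obtain ⟨hcont, hper, -, heq⟩ := hsol
  obtain ⟨C, hC, hK⟩ := Kker_bound h0 h1
  set I : ℝ := ∫ z in (-π)..π, |z| ^ (α / 2 - 1) with hI
  obtain ⟨ε, hε, hε2, hsmall, hneg⟩ := small_eps (α := α) (C := C) (I := I) h0 hc hcont hx0
  let bη : ContDiffBump x0 := ⟨ε / 4, ε / 2, by positivity, by linarith⟩
  let bθ : ContDiffBump x0 := ⟨ε / 2, ε, by positivity, by linarith⟩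
  let η : ℝ → ℝ := bη
  let θ : ℝ → ℝ := bθ
  have hη : ContDiff ℝ (⊤ : ℕ∞) η := bη.contDiff
  have hηd : Continuous (deriv η) := (contDiff_infty_iff_deriv.1 hη).2.continuous
  have hηc : Continuous η := hη.continuous
  have hθc : Continuous θ := bθ.continuous
  have hη1 : η x0 = 1 := bη.one_of_mem_closedBall (by simp [bη]; linarith)
  have hη0 : ∀ y, ε / 2 ≤ |y - x0| → η y = 0 := fun y hy => bη.zero_of_le_dist (by
    rw [Real.dist_eq]; exact hy)
  have hηle : ∀ y, |η y| ≤ 1 := fun y => by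
    rw [abs_of_nonneg bη.nonneg]; exact bη.le_one
  have hθ1 : ∀ y, |y - x0| ≤ ε / 2 → θ y = 1 := fun y hy => bθ.one_of_mem_closedBall (by
    rw [Metric.mem_closedBall, Real.dist_eq]; exact hy)
  have hθ0 : ∀ y, ε ≤ |y - x0| → θ y = 0 := fun y hy => bθ.zero_of_le_dist (by
    rw [Real.dist_eq]; exact hy)
  have hθle : ∀ y, |θ y| ≤ 1 := fun y => by
    rw [abs_of_nonneg bθ.nonneg]; exact bθ.le_one
  obtain ⟨B, hB⟩ : ∃ B, ∀ x, |deriv η x| ≤ B := by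
    have hcs : HasCompactSupport (deriv η) := bη.hasCompactSupport.deriv
    obtain ⟨B, hB⟩ := hcs.exists_bound_of_continuous hηd
    exact ⟨B, hB⟩
  have hB0 : 0 ≤ B := (abs_nonneg _).trans (hB 0)
  obtain ⟨sS, hsS, hsS2⟩ := cutoff_ext (c := 0) (r := 5) (R := 6) (s := Sreg α) (by norm_num)
    (by norm_num) (by simpa using contDiffOn_Sreg h0 h1)
  obtain ⟨sP, hsP, hsP2⟩ := cutoff_ext (c := 1) (r := 1 / 2) (R := 1) (s := fun x : ℝ => x ^ (α - 1))
    (by norm_num) (by norm_num) (by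
      intro x hx
      have : 0 < x := by have := hx.1; linarith
      exact (Real.contDiffAt_rpow_const_of_ne this.ne').contDiffWithinAt)
  have hxle : x0 - ε ≤ x0 + ε := by linarith
  let X := Icc (x0 - ε) (x0 + ε)
  let Z := Icc (-π) π
  let kp : C(X × Z, ℝ) := ⟨fun q => kap η q.1 q.2, by
    have := kap_cont hη
    exact this.comp (by fun_prop : Continuous fun q : X × Z => ((q.1 : ℝ), (q.2 : ℝ)))⟩
  let zc : C(X × Z, ℝ) := ⟨fun q => q.2, by fun_prop⟩
  let zk : C(X × Z, ℝ) := ⟨fun q => kap η q.1 q.2 * q.2, kp.continuous.mul zc.continuous⟩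
  let ηd : C(X × Z, ℝ) := ⟨fun q => deriv η (q.1 - q.2), by fun_prop⟩
  let zeta : C(X × Z, ℝ) := ⟨fun q => |(q.2 : ℝ)| ^ (1 - α),
    (by fun_prop : Continuous fun q : X × Z => |(q.2 : ℝ)|).rpow_const fun _ => Or.inr (by linarith)⟩
  let thc : C(X × Z, ℝ) := ⟨fun q => θ (q.1 - q.2), by fun_prop⟩
  let e1 : C(X × Z, ℝ) := ⟨fun q => (1 - θ (q.1 - q.2)) * φ (q.1 - q.2), by fun_prop⟩
  let pr : C(X × Z, X) := ⟨fun q => projIcc (x0 - ε) (x0 + ε) hxle (q.1 - q.2),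
    continuous_projIcc.comp (by fun_prop)⟩
  let f : ℝ → C(X × Z, ℝ) := fun h => ((1 / (π * Real.Gamma α)) •
    (Asing α • nem sP 1 kp h + zeta * nem sS zc zk h)) * (1 + h • ηd)
  have hf : ContDiff ℝ (⊤ : ℕ∞) f := by
    have a1 := nem_smooth 1 kp sP hsP
    have a2 := nem_smooth zc zk sS hsS
    exact (((a1.const_smul _).add (contDiff_const.mul a2)).const_smul _).mul
      (contDiff_const.add (contDiff_id.smul contDiff_const))
  obtain ⟨Q, hQ⟩ := exists_Qop (X := X) (abs_rpow_intervalIntegrable h0 (-π) π)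
  let E0 : C(X, ℝ) →L[ℝ] C(X × Z, ℝ) := LinearMap.mkContinuous
    { toFun := fun w => thc * w.comp pr
      map_add' := fun u w => by ext q; simp [mul_add]
      map_smul' := fun r w => by
        ext q
        show θ (q.1 - q.2) * (r * w (pr q)) = r * (θ (q.1 - q.2) * w (pr q))
        ring } 1 (fun w => by
        rw [one_mul, ContinuousMap.norm_le _ (norm_nonneg _)]
        intro q
        show ‖θ (q.1 - q.2) * w (pr q)‖ ≤ ‖w‖
        rw [norm_mul]
        calc _ ≤ 1 * ‖w‖ := mul_le_mul (hθle _) (w.norm_coe_le_norm _) (norm_nonneg _) zero_le_one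
          _ = _ := one_mul _)
  have hE0 : ∀ w q, E0 w q = θ (q.1 - q.2) * w (pr q) := fun w q => rfl
  -- the pointwise kernel identity
  have hker : ∀ (h : ℝ) (x : X) (z : Z), |h| * B ≤ 1 / 2 → (z : ℝ) ≠ 0 →
      |(z:ℝ)| ^ (α - 1) * f h (x, z) =
        Kker α (z + h * (kap η x z * z)) * (1 + h * deriv η (x - z)) := by
    intro h x z hh hz
    have ht : |h * kap η x z| ≤ 1 / 2 := by
      rw [abs_mul]
      exact (mul_le_mul_of_nonneg_left (kap_bound hB _ _) (abs_nonneg h)).trans hh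
    have := kern_factor h0 h1 hsP2 hsS2 hz (abs_le.2 ⟨z.2.1, z.2.2⟩) ht
    rw [← mul_assoc h, this]
    show _ * (((1 / (π * Real.Gamma α)) * (Asing α * sP (1 + h * kap η x z) +
      |(z:ℝ)| ^ (1 - α) * sS (z + h * (kap η x z * z)))) * (1 + h * deriv η (x - z))) = _
    rw [← mul_assoc h]
    ring
  have hT : ∀ w, ‖Q (f 0 * E0 w)‖ ≤ c / 2 * ‖w‖ := by
    intro w
    rw [ContinuousMap.norm_le _ (by positivity)]
    intro x
    rw [hQ]
    have := intervalIntegral.norm_integral_le_of_norm_le negpi_le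
      (f := fun z => |z| ^ (α - 1) * (f 0 * E0 w) (x, projIcc (-π) π negpi_le z))
      (g := fun z => C * (2 * ε) ^ (α / 2) * ‖w‖ * |z| ^ (α / 2 - 1))
      (μ := volume) (Eventually.of_forall fun z hz => ?_)
      ((abs_rpow_intervalIntegrable (by linarith) _ _).const_mul _)
    · refine this.trans ?_
      rw [intervalIntegral.integral_const_mul]
      calc C * (2 * ε) ^ (α / 2) * ‖w‖ * I = C * (2 * ε) ^ (α / 2) * I * ‖w‖ := by ring
        _ ≤ c / 2 * ‖w‖ := mul_le_mul_of_nonneg_right hsmall (norm_nonneg _)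
    · rcases eq_or_ne z 0 with rfl | hz0
      · rw [abs_zero, Real.zero_rpow (by linarith), zero_mul, norm_zero]; positivity
      have hzm : z ∈ Icc (-π) π := ⟨hz.1.le, hz.2⟩
      rw [projIcc_of_mem _ hzm]
      have hk := hker 0 x ⟨z, hzm⟩ (by simp) hz0
      simp only [zero_mul, add_zero, mul_one] at hk
      rw [ContinuousMap.mul_apply, ← mul_assoc, hk, hE0]
      have hR : 0 ≤ C * (2 * ε) ^ (α / 2) * ‖w‖ * |z| ^ (α / 2 - 1) := by positivity
      rcases le_or_gt ε (|(x:ℝ) - z - x0|) with hle | hlt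
      · rw [hθ0 _ hle]; simpa using hR
      · have hx := x.2
        have hz2 : |z| ≤ 2 * ε := by
          have := abs_lt.1 hlt
          rw [abs_le]; constructor <;> linarith [hx.1, hx.2]
        have hzp : 0 < |z| := abs_pos.2 hz0
        have b1 : |Kker α z| ≤ C * ((2 * ε) ^ (α / 2) * |z| ^ (α / 2 - 1)) := by
          refine (hK z (abs_le.2 hzm)).trans (mul_le_mul_of_nonneg_left ?_ hC.le)
          have e : |z| ^ (α - 1) = |z| ^ (α / 2) * |z| ^ (α / 2 - 1) := by
            rw [← Real.rpow_add hzp]; ring_nf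
          rw [e]
          exact mul_le_mul_of_nonneg_right (Real.rpow_le_rpow hzp.le hz2 (by linarith)) (by positivity)
        have b2 : ‖θ ((x:ℝ) - z) * w (pr (x, ⟨z, hzm⟩))‖ ≤ 1 * ‖w‖ := by
          rw [norm_mul]
          exact mul_le_mul (hθle _) (w.norm_coe_le_norm _) (norm_nonneg _) zero_le_one
        rw [norm_mul]
        calc _ ≤ C * ((2 * ε) ^ (α / 2) * |z| ^ (α / 2 - 1)) * (1 * ‖w‖) :=
              mul_le_mul b1 b2 (norm_nonneg _) (by positivity)
          _ = _ := by ring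
  set m0 : ℝ := -(φ x0 / 2) with hm0
  have hm0p : 0 < m0 := by linarith
  let vv : C(ℝ × X, ℝ) := ⟨fun q => Real.log (max (-φ (q.2 + q.1 * η q.2)) m0),
    Continuous.log (by fun_prop) fun q => (lt_max_of_lt_right hm0p).ne'⟩
  let v : ℝ → C(X, ℝ) := vv.curry
  have hv : Continuous v := vv.curry.continuous
  have hev : ∀ (h : ℝ) (x : X), |h| ≤ ε → Real.exp (v h x) = -φ (x + h * η x) := by
    intro h x hh
    show Real.exp (Real.log (max (-φ (x + h * η x)) m0)) = _
    rw [Real.exp_log (lt_max_of_lt_right hm0p), max_eq_left]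
    have hx := x.2
    have h5 : |h * η x| ≤ ε := by
      rw [abs_mul]
      calc |h| * |η x| ≤ ε * 1 := mul_le_mul hh (hηle _) (abs_nonneg _) hε.le
        _ = ε := mul_one _
    have h6 := abs_le.1 h5
    have := hneg (x + h * η x) (by rw [abs_le]; constructor <;> linarith [hx.1, hx.2])
    linarith
  let μ : C(X, ℝ) := ContinuousMap.const _ ((1 / (2 * π)) * ∫ y in (-π)..π, nAbs p (φ y))
  have hzero : ∀ h : ℝ, |h| ≤ ε → |h| * B ≤ 1 / 2 → Ffun c p μ f Q E0 e1 (h, v h) = 0 := by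
    intro h hh hhB
    ext x
    have hx := x.2
    have hvx := hev h x hh
    have hpos : 0 < -φ (x + h * η x) := by rw [← hvx]; positivity
    have hpw : Real.exp (p * v h x) = nAbs p (φ (x + h * η x)) := by
      unfold nAbs
      rw [mul_comm, Real.exp_mul, hvx, abs_of_neg (by linarith)]
    have hQx : Q (f h * (E0 (-NormedSpace.exp (v h)) + e1)) x =
        ∫ y in (-π)..π, Kker α (x + h * η x - y) * φ y := by
      rw [change_var α hper hη hB hhB
        (hη0 _ (by rw [abs_of_neg (by linarith [hx.2])]; linarith [hx.2]))
        (hη0 _ (by rw [abs_of_pos (by linarith [hx.1])]; linarith [hx.1])), hQ]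
      refine intervalIntegral.integral_congr_ae ?_
      have hne : ∀ᵐ z : ℝ, z ≠ 0 := by
        have : ({(0:ℝ)} : Set ℝ)ᶜ ∈ ae volume := compl_mem_ae_iff.2 (measure_singleton 0)
        exact this
      filter_upwards [hne] with z hz0 hz
      rw [uIoc_of_le negpi_le] at hz
      have hzm : z ∈ Icc (-π) π := ⟨hz.1.le, hz.2⟩
      rw [projIcc_of_mem _ hzm, ContinuousMap.mul_apply, ← mul_assoc, hker h x ⟨z, hzm⟩ hhB hz0]
      have hval : (E0 (-NormedSpace.exp (v h)) + e1) (x, ⟨z, hzm⟩) = φ (x - z + h * η (x - z)) := by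
        rw [ContinuousMap.add_apply, hE0]
        show θ (x - z) * (-NormedSpace.exp (v h)) (pr (x, ⟨z, hzm⟩)) + (1 - θ (x - z)) * φ (x - z) = _
        rcases le_or_gt ε (|(x:ℝ) - z - x0|) with hle | hlt
        · rw [hθ0 _ hle, hη0 _ (by linarith)]; simp
        · have hm : (x:ℝ) - z ∈ Icc (x0 - ε) (x0 + ε) := by
            have := abs_lt.1 hlt
            constructor <;> linarith
          have hprq : pr (x, ⟨z, hzm⟩) = ⟨(x:ℝ) - z, hm⟩ := projIcc_of_mem hxle hm
          rw [hprq, ContinuousMap.neg_apply, expC_apply, hev h ⟨(x:ℝ) - z, hm⟩ hh, neg_neg]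
          rcases le_or_gt (ε / 2) (|(x:ℝ) - z - x0|) with h7 | h7
          · simp only [hη0 _ h7, mul_zero, add_zero]; ring
          · rw [hθ1 _ h7.le]; ring
      rw [hval]
      ring
    have he := heq (x + h * η x)
    show -(c * (NormedSpace.exp (v h)) x) - (NormedSpace.exp (p • v h)) x
      + ((1 / (2 * π)) * ∫ y in (-π)..π, nAbs p (φ y))
      - Q (f h * (E0 (-NormedSpace.exp (v h)) + e1)) x = 0
    have k4 : (NormedSpace.exp (p • v h)) x = Real.exp (p * v h x) := expC_apply _ _
    rw [hQx, k4, hpw, expC_apply, hvx, he]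
    ring
  have e1' : ∀ᶠ h in 𝓝 (0:ℝ), |h| ≤ ε := by
    have : Tendsto (fun h : ℝ => |h|) (𝓝 0) (𝓝 0) := by simpa using continuous_abs.tendsto (0:ℝ)
    exact (this.eventually (gt_mem_nhds hε)).mono fun _ h => h.le
  have e2' : ∀ᶠ h in 𝓝 (0:ℝ), |h| * B ≤ 1 / 2 := by
    have : Tendsto (fun h : ℝ => |h| * B) (𝓝 0) (𝓝 0) := by
      simpa using (by fun_prop : Continuous fun h : ℝ => |h| * B).tendsto (0:ℝ)
    exact (this.eventually (gt_mem_nhds (by norm_num))).mono fun _ h => h.le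
  have hcd := ift_main c p hc hp μ f Q E0 e1 hf hT v hv.continuousAt
    (by filter_upwards [e1', e2'] with h a b using hzero h a b)
  have hx0X : x0 ∈ Icc (x0 - ε) (x0 + ε) := ⟨by linarith, by linarith⟩
  have hcd2 : ContDiffAt ℝ (⊤ : ℕ∞) (fun h => -Real.exp (v h ⟨x0, hx0X⟩)) 0 := by
    have := ((ContinuousMap.evalCLM ℝ (⟨x0, hx0X⟩ : X)).contDiff.contDiffAt (x := v 0)).comp 0 hcd
    exact (Real.contDiff_exp.contDiffAt.comp 0 this).neg
  have hcd3 : ContDiffAt ℝ (⊤ : ℕ∞) (fun h => φ (x0 + h)) 0 := by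
    refine hcd2.congr_of_eventuallyEq ?_
    filter_upwards [e1'] with h hh
    rw [hev h _ hh]
    simp [hη1]
  have h8 : ContDiffAt ℝ (⊤ : ℕ∞) ((fun h => φ (x0 + h)) ∘ fun y => y - x0) x0 := by
    refine ContDiffAt.comp x0 (by simpa using hcd3) (by fun_prop)
  have h9 : ((fun h => φ (x0 + h)) ∘ fun y => y - x0) = φ := by
    funext y; simp
  rwa [h9] at h8

/-- Uniform lower bound on the wave speed, depending only on `α`
and `p`: `c ≥ δ` for every even, nontrivial steady solution increasing on `(−π,0)`
with `n′(φ) ≤ c` (where in case sgn one additionally assumes `φ(−π/2) = 0`); in case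
abs one even has `c − n′(φ(−π)) ≥ δ`, so `φ` is smooth near `−π`. -/
theorem statement14 (α p : ℝ) (hα : α ∈ Set.Ioo (0:ℝ) 1) (hp : 1 < p) :
    ∃ δ > 0, ∀ (c : ℝ) (φ : ℝ → ℝ), 0 < c →
      (∃ x, φ x ≠ 0) → (∀ x, φ (-x) = φ x) → MonotoneOn φ (Set.Ioo (-π) 0) →
      ((IsSteadySolution α c (nAbs p) φ → (∀ x, nAbs' p (φ x) ≤ c) →
          δ ≤ c ∧ δ ≤ c - nAbs' p (φ (-π)) ∧
          ∃ U : Set ℝ, IsOpen U ∧ -π ∈ U ∧ ContDiffOn ℝ (⊤ : ℕ∞) φ U) ∧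
       (IsSteadySolution α c (nSgn p) φ → (∀ x, nSgn' p (φ x) ≤ c) →
          φ (-(π / 2)) = 0 → δ ≤ c)) := by
  obtain ⟨h0, h1⟩ := hα
  obtain ⟨δ, hδ, hδ1, hlow⟩ := lower_bound h0 h1 hp
  refine ⟨δ, hδ, fun c φ hc hnt hev hmon => ⟨fun hsol hder => ?_, fun hsol _ _ => ?_⟩⟩
  · have hle := hlow c φ hc hnt hev hmon hsol hder
    obtain ⟨hcont, hper, hmean, -⟩ := id hsol
    obtain ⟨k1, -, -⟩ := min_neg hcont hper hev (mono_Icc hcont hmon) hmean hnt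
    have hn : nAbs' p (φ (-π)) ≤ 0 := by
      unfold nAbs'
      exact mul_nonpos_of_nonpos_of_nonneg
        (mul_nonpos_of_nonneg_of_nonpos (by linarith) k1.le) (by positivity)
    refine ⟨hle, by linarith, {x | φ x < 0}, isOpen_lt hcont continuous_const, k1, ?_⟩
    intro x hx
    exact (smooth_at h0 h1 hp hc hsol hx).contDiffWithinAt
  · exact hδ1.trans (sgn_bound h0 h1 hp hnt hev hmon hsol)
end
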